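/- arXiv:math/0202267 — 3 statements merged into one kernel-verified Lean document; each statement's English description precedes it below -/
import Mathlib

section
/- If H_n is the Ehrhart polynomial of the n-th Birkhoff polytope, then for every integer t, H_n(−n−t) = (−1)^{n−1} H_n(t). -/
/-!
Nonnegative semimagic squares form a cone, and by Hall's marriage theorem each of its faces has a
permutation matrix `p` as a vertex. Fix a generic vector `q` and remove from the cone the facets
that separate it from `q`. Subtracting `p` as often as possible from a lattice point of this
half-open cone leaves a point on, or at height one above, a facet that does not contain `p`. By
induction on the dimension the generating function by line sum is therefore a sum of terms
`X ^ k / (1 - X) ^ d`, where `k` counts the removed facets met on the way. For `-q` the removed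
facets are exactly the remaining ones, so that `k` becomes `d - k`, which amounts to replacing `X`
by `1 / X` up to the sign `(-1) ^ d`. If `q` is positive, then nothing is removed for `q`, while
only the interior lattice points remain for `-q`, and these are the semimagic squares shifted by
the all-ones matrix. A generic positive `q` is found by perturbing the all-ones matrix
infinitesimally: its entries lie in a lexicographically ordered rational vector space.
-/

section Reciprocity

open Polynomial

section HilbertPolynomial

variable {K : Type*} [Field K]

theorem eval_preHilbertPoly_sub (k : ℕ) {i : ℕ} (hi : i ≤ k + 1) (x : K) :
    (preHilbertPoly K k (k + 1 - i)).eval x = (-1) ^ k * (preHilbertPoly K k i).eval (-x) := by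
  have h : -x - i + 1 = -(x + i - 1) := by ring
  simp only [preHilbertPoly, eval_smul, eval_comp, eval_add, eval_sub, eval_X, eval_C, eval_one,
    smul_eq_mul, h, ascPochhammer_eval_neg_eq_descPochhammer, descPochhammer_eval_eq_ascPochhammer]
  have hx : x - ((k + 1 - i : ℕ) : K) + 1 = x + i - 1 - k + 1 := by
    push_cast [hi]
    ring
  rw [hx, mul_left_comm, ← mul_assoc ((-1) ^ k), ← mul_pow, neg_one_mul, neg_neg, one_pow, one_mul]

theorem eval_hilbertPoly_succ (p : K[X]) {k N : ℕ} (hp : p.natDegree < N) (x : K) :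
    (hilbertPoly p (k + 1)).eval x =
      ∑ i ∈ Finset.range N, p.coeff i * (preHilbertPoly K k i).eval x := by
  have h : hilbertPoly p (k + 1) = ∑ i ∈ Finset.range N, p.coeff i • preHilbertPoly K k i :=
    sum_over_range' p (f := fun i a ↦ a • preHilbertPoly K k i) (fun _ ↦ zero_smul _ _) N hp
  simp only [h, eval_finsetSum, eval_smul, smul_eq_mul]

theorem eval_hilbertPoly_reflect {p : K[X]} {k : ℕ} (hp : p.natDegree ≤ k + 1) (x : K) :
    (hilbertPoly (p.reflect (k + 1)) (k + 1)).eval x =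
      (-1) ^ k * (hilbertPoly p (k + 1)).eval (-x) := by
  have hp' : (p.reflect (k + 1)).natDegree < k + 2 :=
    Nat.lt_succ_of_le (natDegree_reflect_le.trans (max_le le_rfl hp))
  rw [eval_hilbertPoly_succ _ (Nat.lt_succ_of_le hp), eval_hilbertPoly_succ _ hp',
    ← Finset.sum_flip, Finset.mul_sum]
  refine Finset.sum_congr rfl fun i hi ↦ ?_
  have hik : i ≤ k + 1 := Nat.le_of_lt_succ (Finset.mem_range.mp hi)
  rw [coeff_reflect, revAt_le (Nat.sub_le _ _), Nat.sub_sub_self hik,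
    eval_preHilbertPoly_sub k hik, mul_left_comm]

theorem eq_hilbertPoly_of_coeff_eq [CharZero K] {d N : ℕ} {f : PowerSeries K} {p F : K[X]}
    (hf : f * (1 - PowerSeries.X) ^ d = (p : PowerSeries K))
    (hF : ∀ n > N, PowerSeries.coeff n f = F.eval (n : K)) : F = hilbertPoly p d := by
  have hfp : p * (PowerSeries.invOneSubPow K d : PowerSeries K) = f := by
    rw [← hf, ← PowerSeries.invOneSubPow_inv_eq_one_sub_pow, mul_assoc]
    simp
  exact eq_hilbertPoly_of_forall_coeff_eq_eval N fun n hn ↦ by rw [hfp, hF n hn]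

end HilbertPolynomial

/-- The power series `f = h / (1 - X) ^ d` and `g = X ^ d h(1 / X) / (1 - X) ^ d`, where `h` is a
polynomial of degree at most `d`, are expansions of rational functions related by
`g(X) = (-1) ^ d f(1 / X)`. -/
def IsReciprocal {R : Type*} [CommRing R] (d : ℕ) (f g : PowerSeries R) : Prop :=
  ∃ h : R[X], h.natDegree ≤ d ∧ f * (1 - PowerSeries.X) ^ d = (h : PowerSeries R) ∧
    g * (1 - PowerSeries.X) ^ d = (h.reflect d : PowerSeries R)

namespace IsReciprocal

section CommRing

variable {R : Type*} [CommRing R] {d : ℕ} {f g f' g' : PowerSeries R}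

theorem one : IsReciprocal 0 (1 : PowerSeries R) 1 :=
  ⟨1, by simp, by simp, by simp⟩

theorem zero (d : ℕ) : IsReciprocal d (0 : PowerSeries R) 0 :=
  ⟨0, by simp, by simp, by simp⟩

theorem add (h : IsReciprocal d f g) (h' : IsReciprocal d f' g') :
    IsReciprocal d (f + f') (g + g') := by
  obtain ⟨p, hp, hf, hg⟩ := h
  obtain ⟨p', hp', hf', hg'⟩ := h'
  exact ⟨p + p', natDegree_add_le_of_degree_le hp hp',
    by rw [add_mul, hf, hf', coe_add], by rw [add_mul, hg, hg', reflect_add, coe_add]⟩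

theorem sum {ι : Type*} (s : Finset ι) {f g : ι → PowerSeries R}
    (h : ∀ i ∈ s, IsReciprocal d (f i) (g i)) :
    IsReciprocal d (∑ i ∈ s, f i) (∑ i ∈ s, g i) := by
  classical
  induction s using Finset.induction_on with
  | empty => simpa using zero d
  | insert a s ha ih =>
    rw [Finset.sum_insert ha, Finset.sum_insert ha]
    exact (h a (s.mem_insert_self a)).add (ih fun i hi ↦ h i (Finset.mem_insert_of_mem hi))

theorem symm (h : IsReciprocal d f g) : IsReciprocal d g f := by
  obtain ⟨p, hp, hf, hg⟩ := h
  exact ⟨p.reflect d, natDegree_reflect_le.trans (max_le le_rfl hp), hg, by rwa [reflect_reflect]⟩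

theorem mul_mk_one (h : IsReciprocal d f g) :
    IsReciprocal (d + 1) (f * PowerSeries.mk 1) (PowerSeries.X * g * PowerSeries.mk 1) := by
  obtain ⟨p, hp, hf, hg⟩ := h
  have cancel (u : PowerSeries R) :
      u * PowerSeries.mk 1 * (1 - PowerSeries.X) ^ (d + 1) = u * (1 - PowerSeries.X) ^ d := by
    rw [pow_succ', mul_assoc, ← mul_assoc (PowerSeries.mk 1),
      PowerSeries.mk_one_mul_one_sub_eq_one, one_mul]
  have hreflect : p.reflect (d + 1) = X * p.reflect d := by
    simpa [mul_comm] using reflect_mul p 1 hp (natDegree_one.trans_le zero_le_one)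
  refine ⟨p, hp.trans d.le_succ, by rw [cancel, hf], ?_⟩
  rw [cancel, mul_assoc, hg, hreflect, coe_mul, coe_X]

theorem X_pow_mul_mk_one {k l : ℕ} (hkl : k + l = 1) (h : IsReciprocal d f g) :
    IsReciprocal (d + 1) (PowerSeries.X ^ k * f * PowerSeries.mk 1)
      (PowerSeries.X ^ l * g * PowerSeries.mk 1) := by
  obtain ⟨rfl, rfl⟩ | ⟨rfl, rfl⟩ := Nat.add_eq_one_iff.mp hkl
  · simpa using h.mul_mk_one
  · simpa using h.symm.mul_mk_one.symm

end CommRing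

theorem eval_eq {K : Type*} [Field K] [CharZero K] {k N : ℕ} {f g : PowerSeries K}
    (h : IsReciprocal (k + 1) f g) {F G : K[X]}
    (hF : ∀ n > N, PowerSeries.coeff n f = F.eval (n : K))
    (hG : ∀ n > N, PowerSeries.coeff n g = G.eval (n : K)) (x : K) :
    G.eval x = (-1) ^ k * F.eval (-x) := by
  obtain ⟨p, hp, hf, hg⟩ := h
  rw [eq_hilbertPoly_of_coeff_eq hf hF, eq_hilbertPoly_of_coeff_eq hg hG,
    eval_hilbertPoly_reflect hp]

theorem eval_neg_sub {K : Type*} [Field K] [CharZero K] {k n N : ℕ} {f : PowerSeries K}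
    (h : IsReciprocal (k + 1) f (PowerSeries.X ^ n * f)) {F : K[X]}
    (hF : ∀ t > N, PowerSeries.coeff t f = F.eval (t : K)) (x : K) :
    F.eval (-n - x) = (-1) ^ k * F.eval x := by
  have hshift : ∀ t > N + n,
      PowerSeries.coeff t (PowerSeries.X ^ n * f) = (F.comp (X - C (n : K))).eval (t : K) := by
    intro t ht
    have hnt : n ≤ t := by omega
    rw [PowerSeries.coeff_X_pow_mul', if_pos hnt, hF (t - n) (by omega), Nat.cast_sub hnt,
      eval_comp, eval_sub, eval_X, eval_C]
  have hF' : ∀ t > N + n, PowerSeries.coeff t f = F.eval (t : K) := fun t ht ↦ hF t (by omega)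
  rw [← neg_neg x, ← h.eval_eq hF' hshift, eval_comp, eval_sub, eval_X, eval_C, neg_neg,
    sub_eq_add_neg, neg_add_eq_sub]

end IsReciprocal

end Reciprocity

section DegreeSeries

variable {M : Type*} [AddCommMonoid M] (R : Type*) [Semiring R] (deg : M →+ ℕ)

/-- The generating function of a set `S` of elements of a graded monoid, counted by degree. A degree
in which `S` has infinitely many elements contributes the coefficient `0`. -/
noncomputable def degSeries (S : Set M) : PowerSeries R :=
  PowerSeries.mk fun t ↦ ({x ∈ S | deg x = t}.ncard : R)

variable {deg}

theorem coeff_degSeries (S : Set M) (t : ℕ) :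
    PowerSeries.coeff t (degSeries R deg S) = ({x ∈ S | deg x = t}.ncard : R) :=
  PowerSeries.coeff_mk _ _

@[simp]
theorem degSeries_empty : degSeries R deg ∅ = 0 := by
  ext t
  simp [coeff_degSeries]

theorem degSeries_singleton_zero : degSeries R deg {0} = 1 := by
  ext t
  rw [coeff_degSeries, PowerSeries.coeff_one]
  split_ifs with ht
  · have h : {x ∈ ({0} : Set M) | deg x = t} = {0} := by ext; simp +contextual [ht]
    rw [h, Set.ncard_singleton, Nat.cast_one]
  · have h : {x ∈ ({0} : Set M) | deg x = t} = ∅ := by ext; simp +contextual [eq_comm, ht]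
    rw [h, Set.ncard_empty, Nat.cast_zero]

theorem degSeries_union {S T : Set M} (hST : Disjoint S T)
    (hS : ∀ t, {x ∈ S | deg x = t}.Finite) (hT : ∀ t, {x ∈ T | deg x = t}.Finite) :
    degSeries R deg (S ∪ T) = degSeries R deg S + degSeries R deg T := by
  ext t
  have h : {x ∈ S ∪ T | deg x = t} = {x ∈ S | deg x = t} ∪ {x ∈ T | deg x = t} :=
    Set.union_inter_distrib_right S T _
  rw [map_add, coeff_degSeries, coeff_degSeries, coeff_degSeries, h,
    Set.ncard_union_eq (hST.mono (Set.sep_subset _ _) (Set.sep_subset _ _)) (hS t) (hT t),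
    Nat.cast_add]

theorem degSeries_biUnion {ι : Type*} (I : Finset ι) {S : ι → Set M}
    (hS : (I : Set ι).PairwiseDisjoint S) (hfin : ∀ i ∈ I, ∀ t, {x ∈ S i | deg x = t}.Finite) :
    degSeries R deg (⋃ i ∈ I, S i) = ∑ i ∈ I, degSeries R deg (S i) := by
  ext t
  have h : {x ∈ ⋃ i ∈ I, S i | deg x = t} = ⋃ i ∈ (I : Set ι), {x ∈ S i | deg x = t} := by
    ext x
    simp only [Set.mem_sep_iff, Set.mem_iUnion, SetLike.mem_coe, exists_prop]
    grind
  rw [map_sum, coeff_degSeries, h, I.finite_toSet.ncard_biUnion (fun i hi ↦ hfin i hi t)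
    (hS.mono fun _ ↦ Set.sep_subset _ _), finsum_mem_coe_finset, Nat.cast_sum]
  simp only [coeff_degSeries]

theorem degSeries_image_add_right [IsRightCancelAdd M] (S : Set M) (p : M) :
    degSeries R deg ((· + p) '' S) = PowerSeries.X ^ deg p * degSeries R deg S := by
  ext t
  rw [PowerSeries.coeff_X_pow_mul', coeff_degSeries]
  split_ifs with ht
  · have h : {x ∈ (· + p) '' S | deg x = t} = (· + p) '' {x ∈ S | deg x = t - deg p} := by
      ext x
      constructor
      · rintro ⟨⟨y, hy, rfl⟩, hx⟩
        exact ⟨y, ⟨hy, by rw [← hx, map_add, Nat.add_sub_cancel]⟩, rfl⟩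
      · rintro ⟨y, ⟨hy, hdeg⟩, rfl⟩
        exact ⟨⟨y, hy, rfl⟩, by rw [map_add, hdeg, Nat.sub_add_cancel ht]⟩
    rw [h, Set.ncard_image_of_injective _ (add_left_injective p), coeff_degSeries]
  · have h : {x ∈ (· + p) '' S | deg x = t} = ∅ := by
      refine Set.eq_empty_of_forall_notMem ?_
      rintro _ ⟨⟨y, -, rfl⟩, hy⟩
      exact ht (hy ▸ by simp)
    rw [h, Set.ncard_empty, Nat.cast_zero]

end DegreeSeries

section Pull

variable {E Γ : Type*} [AddCommGroup Γ]

/-- The vector `q` pulled back from the vertex `p`, to the point where `q - v p` lies on a facet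
that does not contain `p`. -/
def pullAway (q : E → Γ) (p : E → ℕ) (v : Γ) : E → Γ :=
  fun e ↦ q e - p e • v

theorem pullAway_neg (q : E → Γ) (p : E → ℕ) (v : Γ) : pullAway (-q) p (-v) = -pullAway q p v := by
  ext e
  simp only [pullAway, Pi.neg_apply, smul_neg, neg_sub, sub_neg_eq_add, neg_add_eq_sub]

theorem pullAway_lt_zero_iff_of_eq_zero [LT Γ] {q : E → Γ} {p : E → ℕ} {v : Γ} {e : E}
    (he : p e = 0) : pullAway q p v e < 0 ↔ q e < 0 := by
  rw [pullAway, he, zero_nsmul, sub_zero]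

theorem pullAway_lt_zero_iff_of_eq_one [LinearOrder Γ] [IsOrderedAddMonoid Γ] {q : E → Γ}
    {p : E → ℕ} {v : Γ} {e : E} (he : p e = 1) : pullAway q p v e < 0 ↔ q e < v := by
  rw [pullAway, he, one_nsmul, sub_neg]

end Pull

section RationalHull

open Module

theorem finrank_inf_ker_add_one {K V : Type*} [Field K] [AddCommGroup V] [Module K V]
    (W : Submodule K V) [FiniteDimensional K W] (φ : Dual K V) {x : V} (hx : x ∈ W) (hφ : φ x ≠ 0) :
    finrank K ↥(W ⊓ φ.ker) + 1 = finrank K W := by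
  have h : φ.domRestrict W ≠ 0 := fun h ↦ hφ (LinearMap.congr_fun h ⟨x, hx⟩)
  rw [← Dual.finrank_ker_add_one_of_ne_zero h, LinearMap.ker_domRestrict,
    (Submodule.equivMapOfInjective _ W.injective_subtype _).finrank_eq,
    Submodule.map_comap_subtype]

variable {E Γ : Type*} [AddCommGroup Γ] [Module ℚ Γ]

/-- The rational hull of a vector `q` with entries in a rational vector space `Γ`: the smallest
rational subspace `W` of `E → ℚ` such that `q` lies in the scalar extension of `W` to `Γ`. It
consists of the images of `q` under the linear forms on `Γ`. -/
def rationalHull (q : E → Γ) : Submodule ℚ (E → ℚ) :=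
  LinearMap.range (LinearMap.pi fun e ↦ Dual.eval ℚ Γ (q e))

theorem mem_rationalHull {q : E → Γ} {x : E → ℚ} :
    x ∈ rationalHull q ↔ ∃ φ : Dual ℚ Γ, ∀ e, φ (q e) = x e := by
  simp only [rationalHull, LinearMap.mem_range, funext_iff, LinearMap.pi_apply, Dual.eval_apply]

theorem apply_eq_zero_of_mem_rationalHull {q : E → Γ} {x : E → ℚ} (hx : x ∈ rationalHull q) {e : E}
    (he : q e = 0) : x e = 0 := by
  obtain ⟨φ, hφ⟩ := mem_rationalHull.mp hx
  rw [← hφ, he, map_zero]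

theorem rationalHull_zero : rationalHull (0 : E → Γ) = ⊥ :=
  (Submodule.eq_bot_iff _).mpr fun _ hx ↦
    funext fun _ ↦ apply_eq_zero_of_mem_rationalHull hx rfl

theorem rationalHull_neg (q : E → Γ) : rationalHull (-q) = rationalHull q := by
  have h : LinearMap.pi (fun e ↦ Dual.eval ℚ Γ ((-q) e)) =
      -LinearMap.pi fun e ↦ Dual.eval ℚ Γ (q e) := by
    ext
    simp
  rw [rationalHull, h, LinearMap.range_neg, rationalHull]

/-- The submonoid of points with natural coordinates in a rational subspace. -/
def natPoints (W : Submodule ℚ (E → ℚ)) : AddSubmonoid (E → ℕ) :=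
  W.toAddSubmonoid.comap ((Nat.castAddMonoidHom ℚ).compLeft E)

theorem mem_natPoints {W : Submodule ℚ (E → ℚ)} {x : E → ℕ} :
    x ∈ natPoints W ↔ (fun e ↦ (x e : ℚ)) ∈ W :=
  Iff.rfl

theorem add_mem_natPoints_iff {W : Submodule ℚ (E → ℚ)} {x y : E → ℕ} (hy : y ∈ natPoints W) :
    x + y ∈ natPoints W ↔ x ∈ natPoints W := by
  have h : (fun e ↦ ((x + y) e : ℚ)) = (fun e ↦ (x e : ℚ)) + fun e ↦ (y e : ℚ) :=
    funext fun e ↦ Nat.cast_add _ _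
  rw [mem_natPoints, h, Submodule.add_mem_iff_left W (mem_natPoints.mp hy), mem_natPoints]

variable {q : E → Γ} {p : E → ℕ}

theorem mem_rationalHull_pullAway_iff (hp : p ∈ natPoints (rationalHull q)) {a : E} (ha : p a = 1)
    {x : E → ℚ} : x ∈ rationalHull (pullAway q p (q a)) ↔ x ∈ rationalHull q ∧ x a = 0 := by
  have map_pullAway (φ : Dual ℚ Γ) (e : E) :
      φ (pullAway q p (q a) e) = φ (q e) - φ (q a) * p e := by
    rw [pullAway, map_sub, map_nsmul, nsmul_eq_mul, mul_comm]
  constructor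
  · intro hx
    obtain ⟨φ, hφ⟩ := mem_rationalHull.mp hx
    have hx_eq : x = (fun e ↦ φ (q e)) - φ (q a) • fun e ↦ (p e : ℚ) :=
      funext fun e ↦ (hφ e).symm.trans (map_pullAway φ e)
    refine ⟨?_, by simp [hx_eq, ha]⟩
    rw [hx_eq]
    exact sub_mem (mem_rationalHull.mpr ⟨φ, fun _ ↦ rfl⟩) (Submodule.smul_mem _ _ hp)
  · rintro ⟨hx, hxa⟩
    obtain ⟨φ, hφ⟩ := mem_rationalHull.mp hx
    exact mem_rationalHull.mpr ⟨φ, fun e ↦ by rw [map_pullAway, hφ, hφ, hxa, zero_mul, sub_zero]⟩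

theorem mem_natPoints_rationalHull_pullAway_iff (hp : p ∈ natPoints (rationalHull q)) {a : E}
    (ha : p a = 1) {x : E → ℕ} :
    x ∈ natPoints (rationalHull (pullAway q p (q a))) ↔
      x ∈ natPoints (rationalHull q) ∧ x a = 0 := by
  rw [mem_natPoints, mem_rationalHull_pullAway_iff hp ha, Nat.cast_eq_zero, mem_natPoints]

theorem finrank_rationalHull_pullAway_add_one [Finite E]
    (hp : p ∈ natPoints (rationalHull q)) {a : E} (ha : p a = 1) :
    finrank ℚ (rationalHull (pullAway q p (q a))) + 1 = finrank ℚ (rationalHull q) := by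
  have h : rationalHull (pullAway q p (q a)) =
      rationalHull q ⊓ (LinearMap.proj a : Dual ℚ (E → ℚ)).ker :=
    Submodule.ext fun _ ↦ mem_rationalHull_pullAway_iff hp ha
  rw [h]
  exact finrank_inf_ker_add_one _ _ hp (by simp [ha])

end RationalHull

section Facets

variable {E Γ : Type*} [LinearOrder Γ]

/-- The pairs formed by the coordinates of `x` and `q` at the facets that do not contain the vertex
`p`. The facet at which the least pair is attained is the one that `x` is assigned to. -/
def leadingPairs (q : E → Γ) (p x : E → ℕ) : Set (ℕ ×ₗ Γ) :=
  (fun e ↦ toLex (x e, q e)) '' {e | p e = 1}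

theorem isLeast_leadingPairs_iff {q : E → Γ} {p x : E → ℕ} {k : ℕ} {v : Γ} :
    IsLeast (leadingPairs q p x) (toLex (k, v)) ↔
      (∃ e, p e = 1 ∧ x e = k ∧ q e = v) ∧ ∀ e, p e = 1 → k < x e ∨ k = x e ∧ v ≤ q e := by
  rw [IsLeast, leadingPairs, mem_lowerBounds, Set.forall_mem_image]
  simp only [Set.mem_image, Set.mem_ofPred_eq, EmbeddingLike.apply_eq_iff_eq, Prod.mk.injEq,
    Prod.Lex.toLex_le_toLex]

theorem exists_isLeast_leadingPairs [Finite E] {p : E → ℕ} {a : E} (ha : p a = 1) (q : E → Γ)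
    (x : E → ℕ) : ∃ e, p e = 1 ∧ IsLeast (leadingPairs q p x) (toLex (x e, q e)) := by
  obtain ⟨e, he, hmin⟩ := Set.exists_min_image {e | p e = 1} (fun e ↦ toLex (x e, q e))
    (Set.toFinite _) ⟨a, ha⟩
  exact ⟨e, he, ⟨e, he, rfl⟩, Set.forall_mem_image.mpr fun _ ↦ hmin _⟩

/-- The values of `q` on the facets that do not contain the vertex `p`. -/
def facetValues [Fintype E] (q : E → Γ) (p : E → ℕ) : Finset Γ :=
  ({e | p e = 1} : Finset E).image q

theorem mem_facetValues [Fintype E] {q : E → Γ} {p : E → ℕ} {v : Γ} :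
    v ∈ facetValues q p ↔ ∃ e, p e = 1 ∧ q e = v := by
  simp only [facetValues, Finset.mem_image, Finset.mem_filter_univ]

theorem facetValues_neg [Fintype E] [AddCommGroup Γ] (q : E → Γ) (p : E → ℕ) :
    facetValues (-q) p = (facetValues q p).map (Equiv.neg Γ).toEmbedding := by
  rw [Finset.map_eq_image, facetValues, facetValues, Finset.image_image]
  rfl

/-- The lattice height, `0` or `1`, above a facet at which the points of the half-open cone start,
where `v` is the value of `q` on that facet. -/
def facetHeight [Zero Γ] (v : Γ) : ℕ :=
  if v < 0 then 1 else 0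

theorem antitone_facetHeight [Zero Γ] : Antitone (facetHeight : Γ → ℕ) := by
  intro v w hvw
  unfold facetHeight
  split_ifs with hw hv
  exacts [le_rfl, absurd (hvw.trans_lt hw) hv, zero_le_one, le_rfl]

theorem facetHeight_lt_iff [Zero Γ] {v : Γ} {n : ℕ} :
    facetHeight v < n ↔ 0 < n ∧ (v < 0 → 1 < n) := by
  unfold facetHeight
  split_ifs with hv <;> simp only [hv, true_imp_iff, false_imp_iff, and_true] ; omega

theorem facetHeight_add_facetHeight_neg [AddCommGroup Γ] [IsOrderedAddMonoid Γ] {v : Γ}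
    (hv : v ≠ 0) : facetHeight v + facetHeight (-v) = 1 := by
  rcases hv.lt_or_gt with h | h <;> simp [facetHeight, h, h.not_gt]

end Facets

section HalfOpen

variable {E Γ : Type*} [AddCommGroup Γ] [LinearOrder Γ] [Module ℚ Γ]

/-- The lattice points of the cone of nonnegative vectors in the rational hull of `q`, without those
facets of the cone that separate it from `q`. -/
def halfOpenPoints (q : E → Γ) : Set (E → ℕ) :=
  {x ∈ natPoints (rationalHull q) | ∀ e, q e < 0 → 0 < x e}

/-- A natural point of degree one in `W` with coordinates in `{0, 1}`. -/
structure IsUnitVertex (W : Submodule ℚ (E → ℚ)) (deg : (E → ℕ) →+ ℕ) (p : E → ℕ) : Prop where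
  mem : p ∈ natPoints W
  le_one : p ≤ 1
  deg_eq_one : deg p = 1

variable {q : E → Γ} {p x : E → ℕ}

theorem halfOpenPoints_zero : halfOpenPoints (0 : E → Γ) = {0} := by
  ext x
  simp [halfOpenPoints, mem_natPoints, rationalHull_zero, funext_iff]

theorem facetHeight_le_apply (hx : x ∈ halfOpenPoints q) (e : E) : facetHeight (q e) ≤ x e := by
  unfold facetHeight
  split_ifs with h
  exacts [hx.2 e h, Nat.zero_le _]

theorem mem_image_add_halfOpenPoints_iff (hp : p ∈ natPoints (rationalHull q)) (hp1 : p ≤ 1) :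
    x ∈ (· + p) '' halfOpenPoints q ↔
      x ∈ halfOpenPoints q ∧ ∀ e, p e = 1 → facetHeight (q e) < x e := by
  simp only [facetHeight_lt_iff]
  constructor
  · rintro ⟨y, hy, rfl⟩
    refine ⟨⟨add_mem hy.1 hp, fun e he ↦ Nat.add_pos_left (hy.2 e he) _⟩, fun e he ↦ ?_⟩
    have hye := hy.2 e
    simp only [Pi.add_apply, he]
    exact ⟨Nat.succ_pos _, fun h ↦ Nat.succ_lt_succ (hye h)⟩
  · rintro ⟨⟨hx, hpos⟩, hlt⟩
    have hsub (e : E) : p e = 0 ∨ p e = 1 := Nat.le_one_iff_eq_zero_or_eq_one.mp (hp1 e)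
    have hxp : x - p + p = x := tsub_add_cancel_of_le fun e ↦ by
      rcases hsub e with h | h
      · exact h.trans_le (Nat.zero_le _)
      · exact h.trans_le (hlt e h).1
    refine ⟨x - p, ⟨(add_mem_natPoints_iff hp).mp (hxp.symm ▸ hx), fun e he ↦ ?_⟩, hxp⟩
    rw [Pi.sub_apply, Nat.sub_pos_iff_lt]
    rcases hsub e with h | h
    · exact h.trans_lt (hpos e he)
    · exact h.trans_lt ((hlt e h).2 he)

theorem forall_facetHeight_lt_iff [Finite E] (hx : x ∈ halfOpenPoints q) {a : E} (ha : p a = 1) :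
    (∀ e, p e = 1 → facetHeight (q e) < x e) ↔
      ∀ v, ¬ IsLeast (leadingPairs q p x) (toLex (facetHeight v, v)) := by
  constructor
  · rintro h v hv
    obtain ⟨⟨e, he, hxe, rfl⟩, -⟩ := isLeast_leadingPairs_iff.mp hv
    exact (h e he).ne' hxe
  · intro h e he
    obtain ⟨c, -, hmin⟩ := exists_isLeast_leadingPairs ha q x
    have hlt : facetHeight (q c) < x c :=
      (facetHeight_le_apply hx c).lt_of_ne fun heq ↦ h (q c) (heq ▸ hmin)
    rcases (isLeast_leadingPairs_iff.mp hmin).2 e he with hce | ⟨hce, hqc⟩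
    · exact facetHeight_lt_iff.mpr ⟨by omega, fun _ ↦ by omega⟩
    · exact (antitone_facetHeight hqc).trans_lt (hce ▸ hlt)

theorem mem_halfOpenPoints_pullAway_iff [IsOrderedAddMonoid Γ] (hp : p ∈ natPoints (rationalHull q))
    (hp1 : p ≤ 1) {a : E} (ha : p a = 1) {y : E → ℕ} :
    y ∈ halfOpenPoints (pullAway q p (q a)) ↔ (y ∈ natPoints (rationalHull q) ∧ y a = 0) ∧
      (∀ e, p e = 0 → q e < 0 → 0 < y e) ∧ ∀ e, p e = 1 → q e < q a → 0 < y e := by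
  refine and_congr (mem_natPoints_rationalHull_pullAway_iff hp ha) ⟨fun h ↦ ⟨?_, ?_⟩, ?_⟩
  · exact fun e he hqe ↦ h e ((pullAway_lt_zero_iff_of_eq_zero he).mpr hqe)
  · exact fun e he hqe ↦ h e ((pullAway_lt_zero_iff_of_eq_one he).mpr hqe)
  · rintro ⟨h0, h1⟩ e hqe
    rcases Nat.le_one_iff_eq_zero_or_eq_one.mp (hp1 e) with he | he
    · exact h0 e he ((pullAway_lt_zero_iff_of_eq_zero he).mp hqe)
    · exact h1 e he ((pullAway_lt_zero_iff_of_eq_one he).mp hqe)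

theorem image_add_smul_halfOpenPoints_pullAway [IsOrderedAddMonoid Γ]
    (hp : p ∈ natPoints (rationalHull q)) (hp1 : p ≤ 1) {a : E} (ha : p a = 1) :
    (· + facetHeight (q a) • p) '' halfOpenPoints (pullAway q p (q a)) =
      {x ∈ halfOpenPoints q |
        IsLeast (leadingPairs q p x) (toLex (facetHeight (q a), q a))} := by
  have hp01 (e : E) : p e = 0 ∨ p e = 1 := Nat.le_one_iff_eq_zero_or_eq_one.mp (hp1 e)
  ext x
  simp only [isLeast_leadingPairs_iff]
  constructor
  · rintro ⟨y, hy, rfl⟩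
    obtain ⟨⟨hy, hya⟩, hpos0, hpos1⟩ := (mem_halfOpenPoints_pullAway_iff hp hp1 ha).mp hy
    refine ⟨⟨add_mem hy (nsmul_mem hp _), fun e he ↦ ?_⟩, ⟨a, ha, by simp [hya, ha], rfl⟩,
      fun e he ↦ ?_⟩
    · rcases hp01 e with h | h
      · simpa [h] using hpos0 e h he
      · rcases lt_or_ge (q a) 0 with hqa | hqa
        · simp [h, facetHeight, hqa]
        · exact Nat.add_pos_left (hpos1 e h (he.trans_le hqa)) _
    · rcases lt_or_ge (q e) (q a) with hqe | hqe
      · exact Or.inl (by simpa [he] using hpos1 e he hqe)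
      · have := Nat.eq_zero_or_pos (y e)
        simp only [Pi.add_apply, Pi.smul_apply, he, smul_eq_mul, mul_one, hqe, and_true]
        omega
  · rintro ⟨⟨hx, hpos⟩, ⟨c, hc, hxc, hqc⟩, hmin⟩
    rw [← hqc] at hxc hmin ⊢
    have hle : facetHeight (q c) • p ≤ x := fun e ↦ by
      rcases hp01 e with h | h
      · simp [h]
      · simpa [h] using (hmin e h).elim le_of_lt fun h ↦ h.1.le
    obtain ⟨y, rfl⟩ := le_iff_exists_add'.mp hle
    refine ⟨y, (mem_halfOpenPoints_pullAway_iff hp hp1 hc).mpr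
      ⟨⟨(add_mem_natPoints_iff (nsmul_mem hp _)).mp hx, by simpa [hc] using hxc⟩,
        fun e he hqe ↦ by simpa [he] using hpos e hqe,
        fun e he hqe ↦ by simpa [he, hqe.not_ge] using hmin e he⟩, rfl⟩

end HalfOpen

section Recursion

open Module

variable {E Γ : Type*} [AddCommGroup Γ] [LinearOrder Γ] [Module ℚ Γ] {q : E → Γ} {p : E → ℕ}
  {deg : (E → ℕ) →+ ℕ} {W : Submodule ℚ (E → ℚ)} {R : Type*} [CommRing R]

theorem IsUnitVertex.exists_apply_eq_one (hp : IsUnitVertex W deg p) : ∃ e, p e = 1 := by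
  by_contra! h
  have hp0 : p = 0 := funext fun e ↦
    (Nat.le_one_iff_eq_zero_or_eq_one.mp (hp.le_one e)).resolve_right (h e)
  exact zero_ne_one ((map_zero deg).symm.trans (hp0 ▸ hp.deg_eq_one))

theorem mem_image_add_halfOpenPoints_iff_forall_not_isLeast [Finite E]
    (hp : IsUnitVertex (rationalHull q) deg p) {x : E → ℕ} :
    x ∈ (· + p) '' halfOpenPoints q ↔
      x ∈ halfOpenPoints q ∧ ∀ v, ¬ IsLeast (leadingPairs q p x) (toLex (facetHeight v, v)) := by
  obtain ⟨a, ha⟩ := hp.exists_apply_eq_one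
  rw [mem_image_add_halfOpenPoints_iff hp.mem hp.le_one]
  exact and_congr_right fun hx ↦ forall_facetHeight_lt_iff hx ha

variable [IsOrderedAddMonoid Γ]

section FacetSum

variable [Fintype E]

theorem mem_image_add_smul_halfOpenPoints_pullAway_iff (hp : IsUnitVertex (rationalHull q) deg p)
    {x : E → ℕ} {v : Γ} (hv : v ∈ facetValues q p) :
    x ∈ (· + facetHeight v • p) '' halfOpenPoints (pullAway q p v) ↔
      x ∈ halfOpenPoints q ∧ IsLeast (leadingPairs q p x) (toLex (facetHeight v, v)) := by
  obtain ⟨e, he, rfl⟩ := mem_facetValues.mp hv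
  rw [image_add_smul_halfOpenPoints_pullAway hp.mem hp.le_one he, Set.mem_sep_iff]

theorem halfOpenPoints_eq_union (hp : IsUnitVertex (rationalHull q) deg p) :
    halfOpenPoints q = (· + p) '' halfOpenPoints q ∪
      ⋃ v ∈ facetValues q p,
        (· + facetHeight v • p) '' halfOpenPoints (pullAway q p v) := by
  ext x
  simp only [Set.mem_union, Set.mem_iUnion, mem_image_add_halfOpenPoints_iff_forall_not_isLeast hp]
  constructor
  · intro hx
    by_cases h : ∃ v, IsLeast (leadingPairs q p x) (toLex (facetHeight v, v))
    · obtain ⟨v, hv⟩ := h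
      obtain ⟨⟨e, he, -, hev⟩, -⟩ := isLeast_leadingPairs_iff.mp hv
      have hv' : v ∈ facetValues q p := mem_facetValues.mpr ⟨e, he, hev⟩
      exact Or.inr ⟨v, hv', (mem_image_add_smul_halfOpenPoints_pullAway_iff hp hv').mpr ⟨hx, hv⟩⟩
    · exact Or.inl ⟨hx, not_exists.mp h⟩
  · rintro (⟨hx, -⟩ | ⟨v, hv, hx⟩)
    exacts [hx, ((mem_image_add_smul_halfOpenPoints_pullAway_iff hp hv).mp hx).1]

theorem disjoint_image_add_iUnion_image_add_smul (hp : IsUnitVertex (rationalHull q) deg p) :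
    Disjoint ((· + p) '' halfOpenPoints q) (⋃ v ∈ facetValues q p,
        (· + facetHeight v • p) '' halfOpenPoints (pullAway q p v)) := by
  simp only [Set.disjoint_iUnion_right]
  intro v hv
  refine Set.disjoint_left.mpr fun x hx hxv ↦ ?_
  exact ((mem_image_add_halfOpenPoints_iff_forall_not_isLeast hp).mp hx).2 v
    ((mem_image_add_smul_halfOpenPoints_pullAway_iff hp hv).mp hxv).2

theorem pairwiseDisjoint_image_add_smul_halfOpenPoints_pullAway
    (hp : IsUnitVertex (rationalHull q) deg p) :
    (facetValues q p : Set Γ).PairwiseDisjoint fun v ↦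
      (· + facetHeight v • p) '' halfOpenPoints (pullAway q p v) := by
  refine fun v hv w hw hvw ↦ Set.disjoint_left.mpr fun x hxv hxw ↦ hvw ?_
  have h := ((mem_image_add_smul_halfOpenPoints_pullAway_iff hp hv).mp hxv).2.unique
    ((mem_image_add_smul_halfOpenPoints_pullAway_iff hp hw).mp hxw).2
  exact congrArg Prod.snd (toLex.injective h)

theorem degSeries_halfOpenPoints (hp : IsUnitVertex (rationalHull q) deg p)
    (hfin : ∀ t, {x ∈ halfOpenPoints q | deg x = t}.Finite) :
    degSeries R deg (halfOpenPoints q) = ∑ v ∈ facetValues q p,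
      PowerSeries.X ^ facetHeight v * degSeries R deg (halfOpenPoints (pullAway q p v)) *
        PowerSeries.mk 1 := by
  have hfin' {S : Set (E → ℕ)} (hS : S ⊆ halfOpenPoints q) (t : ℕ) :
      {x ∈ S | deg x = t}.Finite :=
    (hfin t).subset fun x hx ↦ ⟨hS hx.1, hx.2⟩
  have hunion := halfOpenPoints_eq_union hp
  have hA : (· + p) '' halfOpenPoints q ⊆ halfOpenPoints q :=
    Set.subset_union_left.trans_eq hunion.symm
  have hB := Set.subset_union_right.trans_eq hunion.symm
  have hrec : degSeries R deg (halfOpenPoints q) =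
      PowerSeries.X * degSeries R deg (halfOpenPoints q) +
        ∑ v ∈ facetValues q p,
          PowerSeries.X ^ facetHeight v * degSeries R deg (halfOpenPoints (pullAway q p v)) := by
    conv_lhs => rw [hunion]
    rw [degSeries_union R (disjoint_image_add_iUnion_image_add_smul hp) (hfin' hA) (hfin' hB),
      degSeries_biUnion R _ (pairwiseDisjoint_image_add_smul_halfOpenPoints_pullAway hp)
        fun v hv ↦ hfin' ((Set.subset_biUnion_of_mem hv).trans hB)]
    simp only [degSeries_image_add_right, map_nsmul, hp.deg_eq_one, smul_eq_mul, mul_one, pow_one]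
  rw [← Finset.sum_mul, ← sub_eq_iff_eq_add'.mpr hrec]
  linear_combination (-degSeries R deg (halfOpenPoints q)) *
    PowerSeries.mk_one_mul_one_sub_eq_one R

end FacetSum

theorem isReciprocal_degSeries_of_isUnitVertex [Finite E] (hp : IsUnitVertex (rationalHull q) deg p)
    (hfin : ∀ t, {x ∈ halfOpenPoints q | deg x = t}.Finite)
    (hfin' : ∀ t, {x ∈ halfOpenPoints (-q) | deg x = t}.Finite) {d : ℕ}
    (h : ∀ e, p e = 1 → IsReciprocal d (degSeries R deg (halfOpenPoints (pullAway q p (q e))))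
      (degSeries R deg (halfOpenPoints (-pullAway q p (q e))))) :
    IsReciprocal (d + 1) (degSeries R deg (halfOpenPoints q))
      (degSeries R deg (halfOpenPoints (-q))) := by
  have := Fintype.ofFinite E
  have hp' : IsUnitVertex (rationalHull (-q)) deg p := by rwa [rationalHull_neg]
  rw [degSeries_halfOpenPoints hp hfin, degSeries_halfOpenPoints hp' hfin',
    facetValues_neg, Finset.sum_map]
  refine IsReciprocal.sum _ fun v hv ↦ ?_
  obtain ⟨e, he, rfl⟩ := mem_facetValues.mp hv
  have hqe : q e ≠ 0 := fun h0 ↦ by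
    simpa [he] using apply_eq_zero_of_mem_rationalHull (mem_natPoints.mp hp.mem) h0
  have hrec := (h e he).X_pow_mul_mk_one (facetHeight_add_facetHeight_neg hqe)
  rwa [← pullAway_neg] at hrec

end Recursion

section Generic

variable {E Γ : Type*} [AddCommGroup Γ] [Module ℚ Γ] {W : Submodule ℚ (E → ℚ)} {q : E → Γ}

/-- The vector `q` is generic in its face of `W` if its rational hull is the whole linear span of
this face. -/
def IsGeneric (W : Submodule ℚ (E → ℚ)) (q : E → Γ) : Prop :=
  ∀ x, x ∈ rationalHull q ↔ x ∈ W ∧ ∀ e, q e = 0 → x e = 0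

namespace IsGeneric

theorem rationalHull_le (hq : IsGeneric W q) : rationalHull q ≤ W :=
  fun x hx ↦ ((hq x).mp hx).1

theorem neg (hq : IsGeneric W q) : IsGeneric W (-q) := by
  simpa only [IsGeneric, rationalHull_neg, Pi.neg_apply, neg_eq_zero] using hq

theorem pull (hq : IsGeneric W q) {p : E → ℕ} (hp : p ∈ natPoints (rationalHull q)) {a : E}
    (ha : p a = 1) : IsGeneric W (pullAway q p (q a)) := by
  refine fun x ↦ ⟨fun hx ↦ ⟨?_, fun e he ↦ apply_eq_zero_of_mem_rationalHull hx he⟩, ?_⟩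
  · exact hq.rationalHull_le ((mem_rationalHull_pullAway_iff hp ha).mp hx).1
  · rintro ⟨hx, hx0⟩
    refine (mem_rationalHull_pullAway_iff hp ha).mpr
      ⟨(hq x).mpr ⟨hx, fun e he ↦ hx0 e ?_⟩, hx0 a ?_⟩
    · have hpe : p e = 0 :=
        Nat.cast_eq_zero.mp (apply_eq_zero_of_mem_rationalHull (mem_natPoints.mp hp) he)
      rw [pullAway, he, hpe, zero_nsmul, sub_zero]
    · rw [pullAway, ha, one_nsmul, sub_self]

end IsGeneric

end Generic

section CompressedCone

open Module

variable {E : Type*} (Γ : Type*) [AddCommGroup Γ] [LinearOrder Γ] [Module ℚ Γ]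

/-- The cone of nonnegative vectors in the rational subspace `W`, graded by `deg`, is *compressed*
if all its pulling triangulations are unimodular: degrees are attained by finitely many lattice
points, and each nonempty face has a vertex of degree one with coordinates in `{0, 1}`. A face is
given by a nonnegative vector `y` in its relative interior, with entries in `Γ`. -/
structure IsCompressedCone (W : Submodule ℚ (E → ℚ)) (deg : (E → ℕ) →+ ℕ) : Prop where
  finite_fibers : ∀ t, {x ∈ (natPoints W : Set (E → ℕ)) | deg x = t}.Finite
  exists_isUnitVertex : ∀ y : E → Γ, rationalHull y ≤ W → 0 ≤ y → y ≠ 0 →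
    ∃ p, IsUnitVertex W deg p ∧ ∀ e, y e = 0 → p e = 0

variable {Γ} {W : Submodule ℚ (E → ℚ)} {deg : (E → ℕ) →+ ℕ} {q : E → Γ}

namespace IsCompressedCone

theorem finite_fibers_halfOpenPoints (hW : IsCompressedCone Γ W deg) (hq : IsGeneric W q) (t : ℕ) :
    {x ∈ halfOpenPoints q | deg x = t}.Finite :=
  (hW.finite_fibers t).subset fun _ hx ↦ ⟨hq.rationalHull_le hx.1.1, hx.2⟩

theorem exists_isUnitVertex_rationalHull (hW : IsCompressedCone Γ W deg)
    (hq : IsGeneric W q) {y : E → Γ} (hy : rationalHull y ≤ rationalHull q) (hy0 : 0 ≤ y)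
    (hyne : y ≠ 0) : ∃ p, IsUnitVertex (rationalHull q) deg p := by
  obtain ⟨p, hp, hpy⟩ := hW.exists_isUnitVertex y (hy.trans hq.rationalHull_le) hy0 hyne
  have hqy (e : E) (he : q e = 0) : y e = 0 := (forall_dual_apply_eq_zero_iff ℚ _).mp fun φ ↦
    apply_eq_zero_of_mem_rationalHull (hy (mem_rationalHull.mpr ⟨φ, fun _ ↦ rfl⟩)) he
  have hmem : p ∈ natPoints (rationalHull q) :=
    (hq _).mpr ⟨hp.mem, fun e he ↦ Nat.cast_eq_zero.mpr (hpy e (hqy e he))⟩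
  exact ⟨p, hmem, hp.le_one, hp.deg_eq_one⟩

theorem exists_isUnitVertex_of_mem_halfOpenPoints [IsOrderedAddMonoid Γ]
    (hW : IsCompressedCone Γ W deg) (hq : IsGeneric W q) (hq0 : q ≠ 0) {x : E → ℕ}
    (hx : x ∈ halfOpenPoints q) : ∃ p, IsUnitVertex (rationalHull q) deg p := by
  obtain rfl | hx0 := eq_or_ne x 0
  · have hqnonneg : 0 ≤ q := fun e ↦ not_lt.mp fun he ↦ (hx.2 e he).false
    exact hW.exists_isUnitVertex_rationalHull hq le_rfl hqnonneg hq0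
  · obtain ⟨a, ha⟩ := Function.ne_iff.mp hq0
    obtain ⟨e, he⟩ := Function.ne_iff.mp hx0
    have hγ : 0 < |q a| := abs_pos.mpr ha
    refine hW.exists_isUnitVertex_rationalHull hq (y := fun e ↦ x e • |q a|) ?_
      (fun e ↦ nsmul_nonneg hγ.le _) (Function.ne_iff.mpr ⟨e, (nsmul_pos hγ he).ne'⟩)
    intro z hz
    obtain ⟨φ, hφ⟩ := mem_rationalHull.mp hz
    have hzx : z = φ |q a| • fun e ↦ (x e : ℚ) := funext fun e ↦ by
      rw [← hφ, map_nsmul, nsmul_eq_mul, Pi.smul_apply, smul_eq_mul, mul_comm]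
    exact hzx ▸ Submodule.smul_mem _ _ hx.1

variable {R : Type*} [CommRing R]

theorem isReciprocal_degSeries [Finite E] [IsOrderedAddMonoid Γ] (hW : IsCompressedCone Γ W deg)
    (hq : IsGeneric W q) :
    IsReciprocal (finrank ℚ (rationalHull q)) (degSeries R deg (halfOpenPoints q))
      (degSeries R deg (halfOpenPoints (-q))) := by
  induction hd : finrank ℚ (rationalHull q) using Nat.strong_induction_on generalizing q with
  | _ d ih =>
  by_cases hp : ∃ p, IsUnitVertex (rationalHull q) deg p
  · obtain ⟨p, hp⟩ := hp
    have hfinrank {e : E} (he : p e = 1) := hd ▸ finrank_rationalHull_pullAway_add_one hp.mem he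
    obtain ⟨a, ha⟩ := hp.exists_apply_eq_one
    rw [← hfinrank ha]
    refine isReciprocal_degSeries_of_isUnitVertex hp (hW.finite_fibers_halfOpenPoints hq)
      (hW.finite_fibers_halfOpenPoints hq.neg) fun e he ↦ ?_
    have := hfinrank ha
    have := hfinrank he
    exact ih _ (by omega) (hq.pull hp.mem he) (by omega)
  · obtain rfl | hq0 := eq_or_ne q 0
    · have hd0 : d = 0 := by rw [← hd, rationalHull_zero, finrank_bot]
      rw [hd0, neg_zero, halfOpenPoints_zero, degSeries_singleton_zero]
      exact IsReciprocal.one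
    · have hq_empty : halfOpenPoints q = ∅ := Set.eq_empty_of_forall_notMem fun x hx ↦
        hp (hW.exists_isUnitVertex_of_mem_halfOpenPoints hq hq0 hx)
      have hneg_empty : halfOpenPoints (-q) = ∅ := Set.eq_empty_of_forall_notMem fun x hx ↦
        hp (rationalHull_neg q ▸
          hW.exists_isUnitVertex_of_mem_halfOpenPoints hq.neg (neg_ne_zero.mpr hq0) hx)
      rw [hq_empty, hneg_empty, degSeries_empty]
      exact IsReciprocal.zero d

/-- A positive generic vector in `W` gives Ehrhart-Macdonald reciprocity: no facet is removed from
the cone for `q`, and all of them are for `-q`. -/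
theorem isReciprocal_degSeries_natPoints [Finite E] [IsOrderedAddMonoid Γ]
    (hW : IsCompressedCone Γ W deg) (hq : rationalHull q = W) (hpos : ∀ e, 0 < q e)
    (hone : 1 ∈ natPoints W) :
    IsReciprocal (finrank ℚ W) (degSeries R deg (natPoints W))
      (PowerSeries.X ^ deg 1 * degSeries R deg (natPoints W)) := by
  have hgen : IsGeneric W q := fun x ↦ by
    rw [hq, iff_self_and]
    exact fun _ e he ↦ ((hpos e).ne' he).elim
  have hclosed : halfOpenPoints q = natPoints W := by
    ext x
    simp only [halfOpenPoints, hq, (hpos _).not_gt, false_imp_iff, implies_true, and_true,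
      Set.mem_ofPred_eq, SetLike.mem_coe]
  have hopen : halfOpenPoints (-q) = (· + 1) '' (natPoints W : Set (E → ℕ)) := by
    ext x
    simp only [halfOpenPoints, rationalHull_neg, hq, Pi.neg_apply, neg_lt_zero, hpos, true_imp_iff]
    constructor
    · rintro ⟨hx, hxpos⟩
      have hx1 : x - 1 + 1 = x := tsub_add_cancel_of_le hxpos
      exact ⟨x - 1, (add_mem_natPoints_iff hone).mp (hx1.symm ▸ hx), hx1⟩
    · rintro ⟨y, hy, rfl⟩
      exact ⟨add_mem hy hone, fun e ↦ Nat.succ_pos _⟩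
  have h := hW.isReciprocal_degSeries (R := R) hgen
  rwa [hopen, hclosed, degSeries_image_add_right, hq] at h

end IsCompressedCone

end CompressedCone

section Perturbation

variable {E : Type*}

theorem rationalHull_toLex {k : ℕ} (w : Fin k → E → ℚ) :
    rationalHull (fun e ↦ toLex fun i ↦ w i e) = Submodule.span ℚ (Set.range w) := by
  ext x
  rw [mem_rationalHull, Submodule.mem_span_range_iff_exists_fun]
  constructor
  · rintro ⟨φ, hφ⟩
    refine ⟨fun i ↦ φ (toLex fun j ↦ if i = j then 1 else 0), funext fun e ↦ ?_⟩
    rw [← hφ e, Finset.sum_apply]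
    simp only [Pi.smul_apply, smul_eq_mul, mul_comm]
    exact ((φ ∘ₗ (toLexLinearEquiv ℚ (Fin k → ℚ)).toLinearMap).pi_apply_eq_sum_univ _).symm
  · rintro ⟨c, rfl⟩
    refine ⟨(∑ i, c i • LinearMap.proj i) ∘ₗ (ofLexLinearEquiv ℚ (Fin k → ℚ)).toLinearMap,
      fun e ↦ ?_⟩
    simp

/-- The entries of `q` are `1 + ε₁ b₁ + ε₂ b₂ + ⋯` with infinitesimals `ε₁ ≫ ε₂ ≫ ⋯` and generators
`b₁, b₂, …` of `W`. -/
theorem exists_rationalHull_eq [Finite E] (W : Submodule ℚ (E → ℚ)) (hW : 1 ∈ W) :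
    ∃ (k : ℕ) (q : E → Lex (Fin k → ℚ)), rationalHull q = W ∧ ∀ e, 0 < q e := by
  obtain ⟨k, b, hb⟩ := Submodule.fg_iff_exists_fin_generating_family.mp (IsNoetherian.noetherian W)
  refine ⟨k + 1, fun e ↦ toLex fun i ↦ (Fin.cons 1 b : Fin (k + 1) → E → ℚ) i e, ?_, fun e ↦ ?_⟩
  · rw [rationalHull_toLex, Fin.range_cons, Submodule.span_insert_eq_span (hb ▸ hW), hb]
  · exact ⟨0, fun i hi ↦ (Fin.not_lt_zero i hi).elim, zero_lt_one⟩

end Perturbation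

section Semimagic

open Module

theorem exists_perm_forall_ne_zero_of_sum_eq {ι Γ : Type*} [Fintype ι] [AddCommGroup Γ]
    [LinearOrder Γ] [IsOrderedAddMonoid Γ] {M : ι → ι → Γ} {c : Γ} (hM : ∀ i j, 0 ≤ M i j)
    (hc : 0 < c) (hrow : ∀ i, ∑ j, M i j = c) (hcol : ∀ j, ∑ i, M i j = c) :
    ∃ σ : Equiv.Perm ι, ∀ i, M i (σ i) ≠ 0 := by
  classical
  let support (i : ι) : Finset ι := {j | M i j ≠ 0}
  have hall (s : Finset ι) : s.card ≤ (s.biUnion support).card := by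
    have hsum : s.card • c ≤ (s.biUnion support).card • c :=
      calc s.card • c = ∑ i ∈ s, ∑ j, M i j := by simp only [hrow, Finset.sum_const]
        _ = ∑ i ∈ s, ∑ j ∈ s.biUnion support, M i j := by
          refine Finset.sum_congr rfl fun i hi ↦ (Finset.sum_subset (Finset.subset_univ _) ?_).symm
          intro j _ hj
          by_contra hij
          exact hj (Finset.mem_biUnion.mpr ⟨i, hi, Finset.mem_filter_univ j |>.mpr hij⟩)
        _ = ∑ j ∈ s.biUnion support, ∑ i ∈ s, M i j := Finset.sum_comm
        _ ≤ ∑ j ∈ s.biUnion support, ∑ i, M i j := Finset.sum_le_sum fun j _ ↦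
          Finset.sum_le_sum_of_subset_of_nonneg (Finset.subset_univ _) fun i _ _ ↦ hM i j
        _ = (s.biUnion support).card • c := by simp only [hcol, Finset.sum_const]
    exact (nsmul_le_nsmul_iff_left hc).mp hsum
  obtain ⟨σ, hσ, hsupport⟩ := (Finset.all_card_le_biUnion_card_iff_exists_injective support).mp hall
  exact ⟨Equiv.ofBijective σ (Finite.injective_iff_bijective.mp hσ),
    fun i ↦ Finset.mem_filter_univ (σ i) |>.mp (hsupport i)⟩

/-- The rational semimagic squares: all row sums and all column sums are equal. -/
def semimagic (ι : Type*) [Fintype ι] : Submodule ℚ (ι × ι → ℚ) where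
  carrier := {x | ∀ i j, ∑ k, x (i, k) = ∑ k, x (k, j)}
  add_mem' hx hy i j := by simp only [Pi.add_apply, Finset.sum_add_distrib, hx i j, hy i j]
  zero_mem' _ _ := by simp only [Pi.zero_apply, Finset.sum_const_zero]
  smul_mem' c x hx i j := by simp only [Pi.smul_apply, ← Finset.smul_sum, hx i j]

variable {ι : Type*} [Fintype ι]

theorem mem_semimagic {x : ι × ι → ℚ} :
    x ∈ semimagic ι ↔ ∀ i j, ∑ k, x (i, k) = ∑ k, x (k, j) :=
  Iff.rfl

theorem mem_natPoints_semimagic {x : ι × ι → ℕ} :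
    x ∈ natPoints (semimagic ι) ↔ ∀ i j, ∑ k, x (i, k) = ∑ k, x (k, j) := by
  simp only [mem_natPoints, mem_semimagic, ← Nat.cast_sum, Nat.cast_inj]

theorem sum_eq_sum_of_rationalHull_le {Γ : Type*} [AddCommGroup Γ] [Module ℚ Γ] {y : ι × ι → Γ}
    (hy : rationalHull y ≤ semimagic ι) (i j : ι) : ∑ k, y (i, k) = ∑ k, y (k, j) := by
  rw [← sub_eq_zero, ← forall_dual_apply_eq_zero_iff ℚ]
  intro φ
  rw [map_sub, map_sum, map_sum, sub_eq_zero]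
  exact hy (mem_rationalHull.mpr ⟨φ, fun _ ↦ rfl⟩) i j

/-- The sum of the row `i`, which for a semimagic square does not depend on `i`. -/
def rowSum (i : ι) : (ι × ι → ℕ) →+ ℕ :=
  ∑ k, Pi.evalAddMonoidHom _ (i, k)

theorem rowSum_apply (i : ι) (x : ι × ι → ℕ) : rowSum i x = ∑ k, x (i, k) := by
  simp only [rowSum, AddMonoidHom.finsetSum_apply, Pi.evalAddMonoidHom_apply]

theorem isUnitVertex_permutation [DecidableEq ι] (σ : Equiv.Perm ι) (i₀ : ι) :
    IsUnitVertex (semimagic ι) (rowSum i₀) fun e ↦ if σ e.1 = e.2 then 1 else 0 := by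
  have hrow (i : ι) : ∑ k, (if σ i = k then 1 else 0) = 1 := by simp
  have hcol (j : ι) : ∑ k, (if σ k = j then 1 else 0) = 1 := by
    simp [← Equiv.eq_symm_apply]
  refine ⟨mem_natPoints_semimagic.mpr fun i j ↦ (hrow i).trans (hcol j).symm, fun e ↦ ?_, ?_⟩
  · dsimp only
    split_ifs
    exacts [le_rfl, zero_le_one]
  · rw [rowSum_apply, hrow]

theorem isCompressedCone_semimagic {Γ : Type*} [AddCommGroup Γ] [LinearOrder Γ]
    [IsOrderedAddMonoid Γ] [Module ℚ Γ] (i₀ : ι) :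
    IsCompressedCone Γ (semimagic ι) (rowSum i₀) := by
  classical
  constructor
  · intro t
    refine (Set.finite_Icc (0 : ι × ι → ℕ) fun _ ↦ t).subset fun x hx ↦ ⟨fun _ ↦ Nat.zero_le _, ?_⟩
    obtain ⟨hx, rfl⟩ := hx
    rintro ⟨i, j⟩
    have hsum := mem_natPoints_semimagic.mp hx
    rw [rowSum_apply, hsum i₀ j]
    exact Finset.single_le_sum (f := fun k ↦ x (k, j)) (fun _ _ ↦ Nat.zero_le _) (Finset.mem_univ i)
  · intro y hy hy0 hyne
    have hsum := sum_eq_sum_of_rationalHull_le hy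
    obtain ⟨⟨a, b⟩, hab⟩ := Function.ne_iff.mp hyne
    have hc : 0 < ∑ k, y (a, k) := Finset.sum_pos' (fun k _ ↦ hy0 (a, k))
      ⟨b, Finset.mem_univ b, (hy0 (a, b)).lt_of_ne' hab⟩
    obtain ⟨σ, hσ⟩ := exists_perm_forall_ne_zero_of_sum_eq (fun i j ↦ hy0 (i, j)) hc
      (fun i ↦ (hsum i b).trans (hsum a b).symm) (fun j ↦ (hsum a j).symm)
    refine ⟨_, isUnitVertex_permutation σ i₀, fun e he ↦ if_neg fun h ↦ hσ e.1 ?_⟩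
    rw [h, he]

theorem one_mem_natPoints_semimagic : 1 ∈ natPoints (semimagic ι) :=
  mem_natPoints_semimagic.mpr fun _ _ ↦ rfl

theorem rowSum_one (i : ι) : rowSum i (1 : ι × ι → ℕ) = Fintype.card ι := by
  simp [rowSum_apply]

theorem isReciprocal_degSeries_semimagic (R : Type*) [CommRing R] (i : ι) :
    IsReciprocal (finrank ℚ (semimagic ι))
      (degSeries R (rowSum i) (natPoints (semimagic ι)))
      (PowerSeries.X ^ Fintype.card ι * degSeries R (rowSum i) (natPoints (semimagic ι))) := by
  obtain ⟨k, q, hq, hpos⟩ := exists_rationalHull_eq (semimagic ι) fun _ _ ↦ rfl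
  rw [← rowSum_one i]
  exact (isCompressedCone_semimagic i).isReciprocal_degSeries_natPoints hq hpos
    one_mem_natPoints_semimagic

theorem coeff_degSeries_semimagic (R : Type*) [Semiring R] (i₀ : ι) (t : ℕ) :
    PowerSeries.coeff t (degSeries R (rowSum i₀) (natPoints (semimagic ι))) =
      Nat.card {M : Matrix ι ι ℕ // (∀ i, ∑ j, M i j = t) ∧ ∀ j, ∑ i, M i j = t} := by
  rw [coeff_degSeries, ← Nat.card_coe_set_eq]
  refine congrArg _ (Nat.card_congr ((Equiv.curry ι ι ℕ).subtypeEquiv fun x ↦ ?_))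
  rw [Set.mem_sep_iff, SetLike.mem_coe, mem_natPoints_semimagic, rowSum_apply]
  constructor
  · rintro ⟨h, rfl⟩
    exact ⟨fun i ↦ (h i i₀).trans (h i₀ i₀).symm, fun j ↦ (h i₀ j).symm⟩
  · rintro ⟨hrow, hcol⟩
    exact ⟨fun i j ↦ (hrow i).trans (hcol j).symm, hrow i₀⟩

/-- A semimagic square of size `m + 1` is determined by its lower right block of size `m` and its
line sum. -/
def semimagicBlock (m : ℕ) : semimagic (Fin (m + 1)) →ₗ[ℚ] (Fin m × Fin m → ℚ) × ℚ where
  toFun x := (fun e ↦ x.1 (e.1.succ, e.2.succ), ∑ k, x.1 (0, k))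
  map_add' x y := by simp [Finset.sum_add_distrib, funext_iff]
  map_smul' c x := by simp [Finset.mul_sum, funext_iff]

theorem semimagicBlock_injective (m : ℕ) : Function.Injective (semimagicBlock m) := by
  rw [← LinearMap.ker_eq_bot, LinearMap.ker_eq_bot']
  rintro ⟨x, hx⟩ hker
  obtain ⟨hblock, hsum⟩ := Prod.ext_iff.mp hker
  have hentry (i j : Fin m) : x (i.succ, j.succ) = 0 := congrFun hblock (i, j)
  have hrow (i : Fin (m + 1)) : ∑ k, x (i, k) = 0 := (hx i 0).trans ((hx 0 0).symm.trans hsum)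
  have hcol (j : Fin (m + 1)) : ∑ k, x (k, j) = 0 := (hx 0 j).symm.trans hsum
  have hleft (i : Fin m) : x (i.succ, 0) = 0 := by
    simpa [Fin.sum_univ_succ, hentry] using hrow i.succ
  have htop (j : Fin m) : x (0, j.succ) = 0 := by
    simpa [Fin.sum_univ_succ, hentry] using hcol j.succ
  have hcorner : x (0, 0) = 0 := by
    simpa [Fin.sum_univ_succ, htop] using hrow 0
  refine Subtype.ext (funext fun ⟨i, j⟩ ↦ ?_)
  cases i using Fin.cases <;> cases j using Fin.cases
  exacts [hcorner, htop _, hleft _, hentry _ _]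

theorem semimagicBlock_surjective (m : ℕ) : Function.Surjective (semimagicBlock m) := by
  rintro ⟨y, s⟩
  let left (i : Fin m) : ℚ := s - ∑ j, y (i, j)
  let top (j : Fin m) : ℚ := s - ∑ i, y (i, j)
  let M : Fin (m + 1) → Fin (m + 1) → ℚ :=
    Fin.cons (Fin.cons (s - ∑ j, top j) top) fun i ↦ Fin.cons (left i) fun j ↦ y (i, j)
  have hcomm : ∑ j, top j = ∑ i, left i := by
    rw [Finset.sum_sub_distrib, Finset.sum_sub_distrib, Finset.sum_comm]
  have hrow (i : Fin (m + 1)) : ∑ k, M i k = s := by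
    cases i using Fin.cases <;> simp [M, left, Fin.sum_univ_succ]
  have hcol (j : Fin (m + 1)) : ∑ k, M k j = s := by
    cases j using Fin.cases <;> simp [M, top, hcomm, Fin.sum_univ_succ]
  exact ⟨⟨fun e ↦ M e.1 e.2, fun i j ↦ (hrow i).trans (hcol j).symm⟩, Prod.ext rfl (hrow 0)⟩

theorem finrank_semimagic (m : ℕ) : finrank ℚ (semimagic (Fin (m + 1))) = m * m + 1 := by
  rw [(LinearEquiv.ofBijective _
    ⟨semimagicBlock_injective m, semimagicBlock_surjective m⟩).finrank_eq]
  simp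

end Semimagic

theorem birkhoff_ehrhart_symmetry_general {K : Type*} [Field K] [CharZero K] (n : ℕ) (hn : 1 ≤ n)
    (H : Polynomial K) (N : ℕ)
    (hH : ∀ t > N, H.eval (t : K) = Nat.card {M : Matrix (Fin n) (Fin n) ℕ //
      (∀ i, ∑ j, M i j = t) ∧ (∀ j, ∑ i, M i j = t)}) (x : K) :
    H.eval (-n - x) = (-1) ^ (n - 1) * H.eval x := by
  obtain ⟨m, rfl⟩ := Nat.exists_eq_add_of_le' hn
  have hrec := isReciprocal_degSeries_semimagic K (0 : Fin (m + 1))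
  rw [finrank_semimagic, Fintype.card_fin] at hrec
  have hsign : (-1 : K) ^ (m * m) = (-1) ^ m :=
    neg_one_pow_congr (by simp [Nat.even_mul])
  rw [hrec.eval_neg_sub fun t ht ↦ (coeff_degSeries_semimagic K 0 t).trans (hH t ht).symm, hsign,
    Nat.add_sub_cancel]

/-- If `H` is the Ehrhart polynomial of the `n`-th Birkhoff polytope (i.e. the
polynomial counting semi-magic squares of size `n` and line sum `t` for
positive integers `t`), then `H(-n-t) = (-1)^{n-1} H(t)` for every integer `t`. -/
theorem birkhoff_ehrhart_symmetry (n : ℕ) (hn : 1 ≤ n) (H : Polynomial ℚ)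
    (hH : ∀ t : ℕ, 0 < t →
      H.eval (t : ℚ) = Nat.card {M : Matrix (Fin n) (Fin n) ℕ //
        (∀ i, ∑ j, M i j = t) ∧ (∀ j, ∑ i, M i j = t)}) :
    ∀ t : ℤ, H.eval ((-(n : ℤ) - t : ℤ) : ℚ) = (-1) ^ (n - 1) * H.eval (t : ℚ) := by
  intro t
  exact_mod_cast birkhoff_ehrhart_symmetry_general n hn H 0 hH t
end

section
/- The number of 4×4 semi-magic squares with line sum t equals (11/11340)t^9 + (11/630)t^8 + (19/135)t^7 + (2/3)t^6 + (1109/540)t^5 + (43/10)t^4 + (35117/5670)t^3 + (379/63)t^2 + (65/18)t + 1. -/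
/-!
Cut a semi-magic square into four 2 × 2 blocks and sort the squares by the margins of the two
diagonal blocks. A square is then a closed walk of length four: its blocks connect, in cyclic
order, the row margins and column margins `ρ`, `γ`, `δ`, `ε` of the diagonal blocks, all of the
same total `s`. Hence the count is `∑ₛ tr ((Aₛ Bₛ)²)`, where `Aₛ` and `Bₛ` count the 2 × 2 tables
with given margins and with complementary margins. Replacing margins by their complements exchanges
`A` and `B`, so `s` and `2t - s` contribute equally.

A 2 × 2 table is one of `1 + μ` tables with the same margins, `μ` being the smallest margin. For
`s ≤ t` this says `A = J + K` and `B = (t - s + 1) J + K`, with `J` the all-ones matrix of rank one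
and `K` the matrix of smallest margins, and the trace becomes a polynomial in the moments `1ᵀ Kᵏ 1`
and `tr K⁴`. Deleting the zero rows and columns of `Kₛ₊₂` leaves `J + Kₛ`, which gives recurrences
for these moments.
-/

open Finset Matrix

section RankOne

variable {R n : Type*} [Fintype n]

lemma trace_smul_vecMulVec_add_mul [CommSemiring R] (u v : n → R) (K Y : Matrix n n R) (p : R) :
    trace ((p • vecMulVec u v + K) * Y) = p * (v ⬝ᵥ Y *ᵥ u) + trace (K * Y) := by
  rw [add_mul, trace_add, smul_mul_assoc, trace_smul, vecMulVec_mul, trace_vecMulVec,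
    dotProduct_comm, ← dotProduct_mulVec, smul_eq_mul]

variable [DecidableEq n]

/-- The moment `vᵀ Kᵏ u`, which is how powers of `K` enter traces of words in `K` and in multiples
of the rank one matrix `u vᵀ`. -/
def powMoment [Semiring R] (u v : n → R) (K : Matrix n n R) (k : ℕ) : R := v ⬝ᵥ K ^ k *ᵥ u

variable [CommSemiring R]

lemma powMoment_zero (u v : n → R) (K : Matrix n n R) : powMoment u v K 0 = v ⬝ᵥ u := by
  simp [powMoment]

lemma powMoment_vecMulVec_add_one (u v : n → R) (K : Matrix n n R) :
    powMoment u v (vecMulVec u v + K) 1 = powMoment u v K 0 ^ 2 + powMoment u v K 1 := by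
  simp [powMoment, add_mulVec, vecMulVec_mulVec, sq]

lemma powMoment_vecMulVec_add_two (u v : n → R) (K : Matrix n n R) :
    powMoment u v (vecMulVec u v + K) 2 =
      powMoment u v K 0 ^ 3 + 2 * powMoment u v K 0 * powMoment u v K 1 + powMoment u v K 2 := by
  simp only [powMoment, pow_succ, pow_zero, one_mul, ← mulVec_mulVec, one_mulVec, add_mulVec,
    vecMulVec_mulVec, mulVec_add, mulVec_smul, dotProduct_add, dotProduct_smul, op_smul_eq_smul,
    smul_eq_mul]
  ring

lemma powMoment_vecMulVec_add_three (u v : n → R) (K : Matrix n n R) :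
    powMoment u v (vecMulVec u v + K) 3 =
      powMoment u v K 0 ^ 4 + 3 * powMoment u v K 0 ^ 2 * powMoment u v K 1
        + powMoment u v K 1 ^ 2 + 2 * powMoment u v K 0 * powMoment u v K 2
        + powMoment u v K 3 := by
  simp only [powMoment, pow_succ, pow_zero, one_mul, ← mulVec_mulVec, one_mulVec, add_mulVec,
    vecMulVec_mulVec, mulVec_add, mulVec_smul, dotProduct_add, dotProduct_smul, op_smul_eq_smul,
    smul_eq_mul]
  ring

lemma trace_sq_smul_vecMulVec_add_mul (u v : n → R) (K : Matrix n n R) (p q : R) :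
    trace (((p • vecMulVec u v + K) * (q • vecMulVec u v + K)) ^ 2) =
      p ^ 2 * q ^ 2 * powMoment u v K 0 ^ 4
        + 2 * p * q * (p + q) * powMoment u v K 0 ^ 2 * powMoment u v K 1
        + (p ^ 2 + q ^ 2) * powMoment u v K 1 ^ 2
        + 4 * p * q * powMoment u v K 0 * powMoment u v K 2
        + 2 * (p + q) * powMoment u v K 3 + trace (K ^ 4) := by
  set A := p • vecMulVec u v + K with hA
  set B := q • vecMulVec u v + K with hB
  have telescope : trace ((A * B) ^ 2) =
      p * (v ⬝ᵥ (B * A * B) *ᵥ u) + q * (v ⬝ᵥ (A * B * K) *ᵥ u) + p * (v ⬝ᵥ (B * K ^ 2) *ᵥ u)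
        + q * (v ⬝ᵥ K ^ 3 *ᵥ u) + trace (K ^ 4) := by
    have h₁ : trace ((A * B) ^ 2) = p * (v ⬝ᵥ (B * A * B) *ᵥ u) + trace (B * (A * B * K)) := by
      rw [show (A * B) ^ 2 = A * (B * A * B) by simp only [sq, mul_assoc], hA,
        trace_smul_vecMulVec_add_mul, trace_mul_comm K, ← hA]
      simp only [mul_assoc]
    have h₂ : trace (B * (A * B * K)) = q * (v ⬝ᵥ (A * B * K) *ᵥ u) + trace (A * (B * K ^ 2)) := by
      rw [hB, trace_smul_vecMulVec_add_mul, trace_mul_comm K, ← hB]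
      simp only [sq, mul_assoc]
    have h₃ : trace (A * (B * K ^ 2)) = p * (v ⬝ᵥ (B * K ^ 2) *ᵥ u) + trace (B * K ^ 3) := by
      rw [hA, trace_smul_vecMulVec_add_mul, trace_mul_comm K, pow_succ K 2, mul_assoc]
    have h₄ : trace (B * K ^ 3) = q * (v ⬝ᵥ K ^ 3 *ᵥ u) + trace (K ^ 4) := by
      rw [hB, trace_smul_vecMulVec_add_mul, ← pow_succ']
    rw [h₁, h₂, h₃, h₄]
    ring
  rw [telescope, hA, hB]
  simp only [powMoment, pow_succ, pow_zero, one_mul, ← mulVec_mulVec, one_mulVec, add_mulVec,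
    smul_mulVec, vecMulVec_mulVec, mulVec_add, mulVec_smul, dotProduct_add, dotProduct_smul,
    op_smul_eq_smul, smul_eq_mul]
  ring

end RankOne

section Support

variable {R m n : Type*} [Semiring R] {e : m → n} {A : Matrix n n R}

/-- `A` vanishes outside the rows and columns indexed by the range of `e`, so that powers of `A`
can be computed in the submatrix `A.submatrix e e`. -/
def IsSupportedOn (e : m → n) (A : Matrix n n R) : Prop :=
  ∀ ⦃i j⦄, A i j ≠ 0 → i ∈ Set.range e ∧ j ∈ Set.range e

variable [Fintype n] [DecidableEq n]

lemma IsSupportedOn.pow_succ (hA : IsSupportedOn e A) (k : ℕ) : IsSupportedOn e (A ^ (k + 1)) := by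
  intro i j hij
  constructor
  · rw [pow_succ', mul_apply] at hij
    obtain ⟨x, -, hx⟩ := exists_ne_zero_of_sum_ne_zero hij
    exact (hA (left_ne_zero_of_mul hx)).1
  · rw [_root_.pow_succ, mul_apply] at hij
    obtain ⟨x, -, hx⟩ := exists_ne_zero_of_sum_ne_zero hij
    exact (hA (right_ne_zero_of_mul hx)).2

variable [Fintype m] [DecidableEq m]

lemma IsSupportedOn.submatrix_pow (he : e.Injective) (hA : IsSupportedOn e A) (k : ℕ) :
    (A ^ k).submatrix e e = A.submatrix e e ^ k := by
  induction k with
  | zero => rw [pow_zero, pow_zero, submatrix_one e he]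
  | succ k ih =>
    rw [pow_succ', pow_succ', ← ih]
    ext i j
    refine (Fintype.sum_of_injective e he _ _ (fun x hx => ?_) fun _ => rfl).symm
    exact mul_eq_zero_of_left (by_contra fun h => hx (hA h).2) _

lemma IsSupportedOn.trace_submatrix_pow (he : e.Injective) (hA : IsSupportedOn e A) (k : ℕ) :
    trace (A.submatrix e e ^ (k + 1)) = trace (A ^ (k + 1)) := by
  rw [← hA.submatrix_pow he]
  exact Fintype.sum_of_injective e he _ _
    (fun x hx => by_contra fun h => hx (hA.pow_succ k h).1) fun _ => rfl

lemma IsSupportedOn.powMoment_submatrix (he : e.Injective) (hA : IsSupportedOn e A) (u v : n → R)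
    (k : ℕ) : powMoment (u ∘ e) (v ∘ e) (A.submatrix e e) (k + 1) = powMoment u v A (k + 1) := by
  rw [powMoment, powMoment, ← hA.submatrix_pow he]
  refine Fintype.sum_of_injective e he _ _ (fun x hx => ?_) fun i => ?_
  · refine mul_eq_zero_of_right _ (sum_eq_zero fun y _ => mul_eq_zero_of_left ?_ _)
    exact by_contra fun h => hx (hA.pow_succ k h).1
  · refine congrArg _ (Fintype.sum_of_injective e he _ _ (fun x hx => ?_) fun _ => rfl)
    exact mul_eq_zero_of_left (by_contra fun h => hx (hA.pow_succ k h).2) _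

end Support

section MinMatrix

/-- The pairs of natural numbers with sum `s`, encoded as functions on `Fin 2`: the possible margins
of a 2 × 2 table with total `s`. -/
abbrev pairsWithSum (s : ℕ) : Finset (Fin 2 → ℕ) := piAntidiag univ s

lemma mem_pairsWithSum {s : ℕ} {ρ : Fin 2 → ℕ} : ρ ∈ pairsWithSum s ↔ ρ 0 + ρ 1 = s := by
  simp [pairsWithSum, Fin.sum_univ_two]

lemma card_pairsWithSum (s : ℕ) : #(pairsWithSum s) = s + 1 := by
  rw [pairsWithSum, piAntidiag_univ_fin_eq_antidiagonalTuple, Nat.antidiagonalTuple_two, card_map,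
    Nat.card_antidiagonal]

/-- The matrix `K` of smallest margins: a 2 × 2 table with margins `ρ` and `γ` is one of
`1 + minMatrix s ρ γ` such tables. -/
def minMatrix (s : ℕ) : Matrix (pairsWithSum s) (pairsWithSum s) ℚ :=
  of fun ρ γ => ((ρ.1 0 ⊓ ρ.1 1 ⊓ (γ.1 0 ⊓ γ.1 1) : ℕ) : ℚ)

/-- The map adding one to both entries of a pair. Its image consists of the pairs that index nonzero
rows of `minMatrix (s + 2)`. -/
def addOnes (s : ℕ) (ρ : pairsWithSum s) : pairsWithSum (s + 2) :=
  ⟨ρ + 1, by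
    have := mem_pairsWithSum.1 ρ.2
    simp only [mem_pairsWithSum, Pi.add_apply, Pi.one_apply]
    omega⟩

lemma addOnes_injective (s : ℕ) : (addOnes s).Injective := fun _ _ h =>
  Subtype.ext (add_right_cancel (congrArg Subtype.val h))

lemma mem_range_addOnes {s : ℕ} {ρ : pairsWithSum (s + 2)} (h : ρ.1 0 ⊓ ρ.1 1 ≠ 0) :
    ρ ∈ Set.range (addOnes s) := by
  have hρ := mem_pairsWithSum.1 ρ.2
  refine ⟨⟨ρ - 1, ?_⟩, Subtype.ext (tsub_add_cancel_of_le ?_)⟩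
  · simp only [mem_pairsWithSum, Pi.sub_apply, Pi.one_apply]
    omega
  · simp only [Pi.le_def, Fin.forall_fin_two, Pi.one_apply]
    omega

lemma isSupportedOn_minMatrix (s : ℕ) : IsSupportedOn (addOnes s) (minMatrix (s + 2)) := by
  intro ρ γ h
  simp only [minMatrix, of_apply, Nat.cast_ne_zero] at h
  exact ⟨mem_range_addOnes (by omega), mem_range_addOnes (by omega)⟩

lemma minMatrix_submatrix_addOnes (s : ℕ) :
    (minMatrix (s + 2)).submatrix (addOnes s) (addOnes s) = vecMulVec 1 1 + minMatrix s := by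
  ext ρ γ
  simp only [minMatrix, addOnes, submatrix_apply, of_apply, Matrix.add_apply, vecMulVec_apply,
    Pi.add_apply, Pi.one_apply, mul_one, Nat.add_min_add_right]
  push_cast
  ring

lemma minMatrix_eq_zero {s : ℕ} (hs : s < 2) : minMatrix s = 0 := by
  ext ρ γ
  have hρ := mem_pairsWithSum.1 ρ.2
  simp only [minMatrix, of_apply, Matrix.zero_apply, Nat.cast_eq_zero]
  omega

lemma powMoment_minMatrix_zero (s : ℕ) : powMoment 1 1 (minMatrix s) 0 = s + 1 := by
  rw [powMoment_zero, one_dotProduct_one, Fintype.card_coe, card_pairsWithSum]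
  push_cast
  rfl

lemma powMoment_minMatrix_succ_eq_zero {s : ℕ} (hs : s < 2) (k : ℕ) :
    powMoment 1 1 (minMatrix s) (k + 1) = 0 := by
  simp [powMoment, minMatrix_eq_zero hs]

lemma powMoment_minMatrix_add_two (s k : ℕ) :
    powMoment 1 1 (minMatrix (s + 2)) (k + 1) =
      powMoment 1 1 (vecMulVec 1 1 + minMatrix s) (k + 1) := by
  rw [← minMatrix_submatrix_addOnes]
  exact ((isSupportedOn_minMatrix s).powMoment_submatrix (addOnes_injective s) 1 1 k).symm

lemma powMoment_minMatrix_one (s : ℕ) :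
    powMoment 1 1 (minMatrix s) 1 = (s + 1) * s * (s - 1) / 6 := by
  induction s using Nat.twoStepInduction with
  | zero => simp [powMoment_minMatrix_succ_eq_zero]
  | one => simp [powMoment_minMatrix_succ_eq_zero]
  | more s ih _ =>
    rw [powMoment_minMatrix_add_two, powMoment_vecMulVec_add_one]
    simp only [powMoment_minMatrix_zero, ih]
    push_cast
    ring

lemma powMoment_minMatrix_two (s : ℕ) :
    powMoment 1 1 (minMatrix s) 2 = (s + 1) * s * (s - 1) * (s ^ 2 + 1) / 30 := by
  induction s using Nat.twoStepInduction with
  | zero => simp [powMoment_minMatrix_succ_eq_zero]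
  | one => simp [powMoment_minMatrix_succ_eq_zero]
  | more s ih _ =>
    rw [powMoment_minMatrix_add_two, powMoment_vecMulVec_add_two]
    simp only [powMoment_minMatrix_zero, powMoment_minMatrix_one, ih]
    push_cast
    ring

lemma powMoment_minMatrix_three (s : ℕ) :
    powMoment 1 1 (minMatrix s) 3 =
      (s + 1) * s * (s - 1) * (17 * s ^ 4 + 31 * s ^ 2 + 24) / 2520 := by
  induction s using Nat.twoStepInduction with
  | zero => simp [powMoment_minMatrix_succ_eq_zero]
  | one => simp [powMoment_minMatrix_succ_eq_zero]
  | more s ih _ =>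
    rw [powMoment_minMatrix_add_two, powMoment_vecMulVec_add_three]
    simp only [powMoment_minMatrix_zero, powMoment_minMatrix_one, powMoment_minMatrix_two, ih]
    push_cast
    ring

lemma trace_minMatrix_pow_four (s : ℕ) :
    trace (minMatrix s ^ 4) = ((-1) ^ s - 1 : ℚ) / 64
      + s ^ 2 * (17 * s ^ 6 + 56 * s ^ 4 + 98 * s ^ 2 + 144) / 10080 := by
  induction s using Nat.twoStepInduction with
  | zero => simp [minMatrix_eq_zero]
  | one => norm_num [minMatrix_eq_zero]
  | more s ih _ =>
    have hsq := trace_sq_smul_vecMulVec_add_mul 1 1 (minMatrix s) 1 1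
    rw [one_smul, ← sq, ← pow_mul] at hsq
    rw [← (isSupportedOn_minMatrix s).trace_submatrix_pow (addOnes_injective s) 3,
      minMatrix_submatrix_addOnes, hsq]
    simp only [powMoment_minMatrix_zero, powMoment_minMatrix_one, powMoment_minMatrix_two,
      powMoment_minMatrix_three, ih]
    push_cast
    ring

end MinMatrix

section Tables

variable {m n m₁ m₂ n₁ n₂ m' n' : Type*} [Fintype m] [Fintype n] [Fintype m₁] [Fintype m₂]
  [Fintype n₁] [Fintype n₂] [Fintype m'] [Fintype n']
  [DecidableEq m] [DecidableEq n] [DecidableEq m₁] [DecidableEq m₂]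
  [DecidableEq n₁] [DecidableEq n₂] [DecidableEq m'] [DecidableEq n']

/-- The contingency tables with row sums `r` and column sums `c`. The rows are drawn from
`piAntidiag`, so that finiteness comes with the definition. -/
def contingencyTables (r : m → ℕ) (c : n → ℕ) : Finset (Matrix m n ℕ) :=
  {M ∈ Fintype.piFinset fun i => piAntidiag univ (r i) | ∀ j, ∑ i, M i j = c j}

lemma mem_contingencyTables {r : m → ℕ} {c : n → ℕ} {M : Matrix m n ℕ} :
    M ∈ contingencyTables r c ↔ (∀ i, ∑ j, M i j = r i) ∧ ∀ j, ∑ i, M i j = c j := by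
  refine mem_filter.trans (and_congr_left fun _ => Fintype.mem_piFinset.trans ?_)
  simp only [mem_piAntidiag, mem_univ, implies_true, and_true]

lemma card_contingencyTables_comp_equiv (e : m ≃ m') (f : n ≃ n') (r : m' → ℕ) (c : n' → ℕ) :
    #(contingencyTables (r ∘ e) (c ∘ f)) = #(contingencyTables r c) := by
  refine card_equiv (reindex e f) fun M => ?_
  have hrow (i : m) : ∑ j, M i (f.symm j) = ∑ j, M i j := f.symm.sum_comp (M i)
  have hcol (j : n) : ∑ i, M (e.symm i) j = ∑ i, M i j := e.symm.sum_comp (M · j)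
  simp only [mem_contingencyTables, reindex_apply, submatrix_apply, Function.comp_apply,
    e.forall_congr_left, f.forall_congr_left, Equiv.apply_symm_apply, hrow, hcol]

lemma card_contingencyTables_comm (r : m → ℕ) (c : n → ℕ) :
    #(contingencyTables r c) = #(contingencyTables c r) :=
  card_equiv (transposeAddEquiv m n ℕ).toEquiv fun _ => by
    simp [mem_contingencyTables, and_comm]

lemma sum_eq_sum_of_card_contingencyTables_ne_zero {r : m → ℕ} {c : n → ℕ}
    (h : #(contingencyTables r c) ≠ 0) : ∑ i, r i = ∑ j, c j := by
  obtain ⟨M, hM⟩ := card_ne_zero.1 h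
  rw [mem_contingencyTables] at hM
  simp only [← hM.1, ← hM.2]
  exact sum_comm

lemma card_contingencyTables_fin_two {r c : Fin 2 → ℕ} (h : r 0 + r 1 = c 0 + c 1) :
    #(contingencyTables r c) = r 0 ⊓ r 1 ⊓ (c 0 ⊓ c 1) + 1 := by
  have hcard : #(contingencyTables r c) = #(Icc (r 0 - c 1) (r 0 ⊓ c 0)) := by
    refine card_nbij' (fun M => M 0 0) (fun x => !![x, r 0 - x; c 0 - x, c 1 + x - r 0])
      (fun M hM => ?_) (fun x hx => ?_) (fun M hM => ?_) fun _ _ => rfl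
    · simp only [mem_coe, mem_contingencyTables, Fin.sum_univ_two, Fin.forall_fin_two] at hM
      simp only [coe_Icc, Set.mem_Icc, le_inf_iff]
      omega
    · simp only [coe_Icc, Set.mem_Icc, le_inf_iff] at hx
      simp only [mem_coe, mem_contingencyTables, Fin.sum_univ_two, Fin.forall_fin_two, of_apply,
        cons_val_zero, cons_val_one]
      omega
    · simp only [mem_coe, mem_contingencyTables, Fin.sum_univ_two, Fin.forall_fin_two] at hM
      rw [eta_fin_two M]
      simp only [EmbeddingLike.apply_eq_iff_eq, vecCons_inj, and_true, true_and, of_apply,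
        cons_val_zero]
      omega
  rw [hcard, Nat.card_Icc]
  omega

/-- The row and column sums of the two diagonal blocks, in the order in which the other two blocks
link them into a cycle. -/
def blockMargins (M : Matrix (m₁ ⊕ m₂) (n₁ ⊕ n₂) ℕ) :
    (m₁ → ℕ) × (n₁ → ℕ) × (m₂ → ℕ) × (n₂ → ℕ) :=
  (fun i => ∑ j, M.toBlocks₁₁ i j, fun j => ∑ i, M.toBlocks₁₁ i j,
    fun i => ∑ j, M.toBlocks₂₂ i j, fun j => ∑ i, M.toBlocks₂₂ i j)

lemma mem_contingencyTables_sumElim {r₁ : m₁ → ℕ} {r₂ : m₂ → ℕ} {c₁ : n₁ → ℕ} {c₂ : n₂ → ℕ}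
    {M : Matrix (m₁ ⊕ m₂) (n₁ ⊕ n₂) ℕ} {ρ : m₁ → ℕ} {γ : n₁ → ℕ} {δ : m₂ → ℕ} {ε : n₂ → ℕ}
    (hρ : ρ ≤ r₁) (hγ : γ ≤ c₁) (hδ : δ ≤ r₂) (hε : ε ≤ c₂) :
    M ∈ contingencyTables (Sum.elim r₁ r₂) (Sum.elim c₁ c₂) ∧ blockMargins M = (ρ, γ, δ, ε) ↔
      M.toBlocks₁₁ ∈ contingencyTables ρ γ ∧
        M.toBlocks₂₁ ∈ contingencyTables (r₂ - δ) (c₁ - γ) ∧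
          M.toBlocks₂₂ ∈ contingencyTables δ ε ∧
            M.toBlocks₁₂ ∈ contingencyTables (r₁ - ρ) (c₂ - ε) := by
  simp only [Pi.le_def] at hρ hγ hδ hε
  simp only [mem_contingencyTables, blockMargins, Sum.forall, Fintype.sum_sum_type, Sum.elim_inl,
    Sum.elim_inr, Prod.mk.injEq, funext_iff, toBlocks₁₁, toBlocks₁₂, toBlocks₂₁, toBlocks₂₂,
    of_apply, Pi.sub_apply]
  grind

lemma card_contingencyTables_sumElim (r₁ : m₁ → ℕ) (r₂ : m₂ → ℕ) (c₁ : n₁ → ℕ) (c₂ : n₂ → ℕ) :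
    #(contingencyTables (Sum.elim r₁ r₂) (Sum.elim c₁ c₂)) =
      ∑ ρ ∈ Iic r₁, ∑ γ ∈ Iic c₁, ∑ δ ∈ Iic r₂, ∑ ε ∈ Iic c₂,
        #(contingencyTables ρ γ) * #(contingencyTables (r₂ - δ) (c₁ - γ)) *
          #(contingencyTables δ ε) * #(contingencyTables (r₁ - ρ) (c₂ - ε)) := by
  have hmaps : ∀ M ∈ contingencyTables (Sum.elim r₁ r₂) (Sum.elim c₁ c₂),
      blockMargins M ∈ Iic r₁ ×ˢ Iic c₁ ×ˢ Iic r₂ ×ˢ Iic c₂ := by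
    intro M hM
    simp only [mem_contingencyTables, Sum.forall, Fintype.sum_sum_type, Sum.elim_inl,
      Sum.elim_inr] at hM
    simp only [blockMargins, mem_product, mem_Iic, Pi.le_def, toBlocks₁₁, toBlocks₂₂, of_apply]
    grind
  rw [card_eq_sum_card_fiberwise hmaps]
  simp only [sum_product]
  refine sum_congr rfl fun ρ hρ => sum_congr rfl fun γ hγ => sum_congr rfl fun δ hδ =>
    sum_congr rfl fun ε hε => ?_
  rw [mem_Iic] at hρ hγ hδ hε
  rw [mul_assoc, mul_assoc, ← card_product, ← card_product, ← card_product]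
  refine card_nbij' (fun M => (M.toBlocks₁₁, M.toBlocks₂₁, M.toBlocks₂₂, M.toBlocks₁₂))
    (fun N => fromBlocks N.1 N.2.2.2 N.2.1 N.2.2.1) (fun M hM => ?_) (fun N hN => ?_)
    (fun M _ => fromBlocks_toBlocks M) (fun N _ => rfl)
  · simpa [mem_contingencyTables_sumElim hρ hγ hδ hε] using hM
  · simpa [mem_contingencyTables_sumElim hρ hγ hδ hε] using hN

end Tables

section Square

variable {n : Type*} [Fintype n] [DecidableEq n]

/-- The margins bounded by `R` whose entries sum to `s`. -/
def subMargins (R : n → ℕ) (s : ℕ) : Finset (n → ℕ) := {ρ ∈ Iic R | ∑ i, ρ i = s}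

lemma mem_subMargins {R ρ : n → ℕ} {s : ℕ} : ρ ∈ subMargins R s ↔ ρ ≤ R ∧ ∑ i, ρ i = s := by
  rw [subMargins, mem_filter, mem_Iic]

lemma sub_mem_subMargins {R ρ : n → ℕ} {s : ℕ} (hρ : ρ ∈ subMargins R s) :
    R - ρ ∈ subMargins R (∑ i, R i - s) := by
  rw [mem_subMargins] at hρ ⊢
  refine ⟨tsub_le_self, ?_⟩
  simp only [Pi.sub_apply, ← hρ.2]
  exact sum_tsub_distrib _ fun i _ => hρ.1 i

/-- The matrix counting the contingency tables with row and column sums from a finite set. -/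
def countMatrix (S : Finset (n → ℕ)) : Matrix S S ℚ :=
  of fun ρ γ => (#(contingencyTables ρ.1 γ.1) : ℚ)

/-- The matrix counting the contingency tables whose row and column sums are complementary in `R`
to margins from a finite set. -/
def complCountMatrix (R : n → ℕ) (S : Finset (n → ℕ)) : Matrix S S ℚ :=
  of fun ρ γ => (#(contingencyTables (R - ρ.1) (R - γ.1)) : ℚ)

/-- The number of contingency tables with all margins `Sum.elim R R` whose first diagonal block has
total `s`, as the weight of the closed walks of length four. -/
def blockCount (R : n → ℕ) (s : ℕ) : ℚ :=
  trace ((countMatrix (subMargins R s) * complCountMatrix R (subMargins R s)) ^ 2)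

lemma blockCount_eq_sum (R : n → ℕ) (s : ℕ) :
    blockCount R s = ∑ ρ ∈ subMargins R s, ∑ γ ∈ subMargins R s, ∑ δ ∈ subMargins R s,
      ∑ ε ∈ subMargins R s, (#(contingencyTables ρ γ) * #(contingencyTables (R - γ) (R - δ)) *
        #(contingencyTables δ ε) * #(contingencyTables (R - ε) (R - ρ)) : ℚ) := by
  simp only [blockCount, countMatrix, complCountMatrix, trace, diag_apply, sq, mul_assoc,
    mul_apply, mul_sum, of_apply, ← sum_coe_sort (subMargins R s)]

lemma sum_Iic_eq_sum_subMargins {M : Type*} [AddCommMonoid M] (R : n → ℕ) (f : (n → ℕ) → M) :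
    ∑ ρ ∈ Iic R, f ρ = ∑ s ∈ range (∑ i, R i + 1), ∑ ρ ∈ subMargins R s, f ρ :=
  (sum_fiberwise_of_maps_to (fun _ hρ => mem_range_succ_iff.2
    (Fintype.sum_mono (mem_Iic.1 hρ))) f).symm

lemma blockCount_reflect {R : n → ℕ} {s : ℕ} (hs : s ≤ ∑ i, R i) :
    blockCount R (∑ i, R i - s) = blockCount R s := by
  let e : subMargins R s ≃ subMargins R (∑ i, R i - s) :=
    { toFun ρ := ⟨R - ρ, sub_mem_subMargins ρ.2⟩
      invFun ρ := ⟨R - ρ, by simpa only [Nat.sub_sub_self hs] using sub_mem_subMargins ρ.2⟩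
      left_inv ρ := Subtype.ext (tsub_tsub_cancel_of_le (mem_subMargins.1 ρ.2).1)
      right_inv ρ := Subtype.ext (tsub_tsub_cancel_of_le (mem_subMargins.1 ρ.2).1) }
  have hcount : (countMatrix (subMargins R (∑ i, R i - s))).submatrix e e =
      complCountMatrix R (subMargins R s) := rfl
  have hcompl : (complCountMatrix R (subMargins R (∑ i, R i - s))).submatrix e e =
      countMatrix (subMargins R s) := by
    ext ρ γ
    have cancel (ρ : subMargins R s) : R - (e ρ).1 = ρ := congrArg Subtype.val (e.left_inv ρ)
    simp only [submatrix_apply, complCountMatrix, countMatrix, of_apply, cancel]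
  have htrace (A : Matrix (subMargins R (∑ i, R i - s)) (subMargins R (∑ i, R i - s)) ℚ) :
      trace (A.submatrix e e) = trace A := e.sum_comp fun i => A i i
  rw [blockCount, blockCount, ← hcount, ← hcompl, submatrix_mul_equiv, sq, sq, submatrix_mul_equiv,
    htrace, ← mul_assoc, trace_mul_comm]
  simp only [mul_assoc]

lemma sum_eq_sum_of_card_contingencyTables_sub_ne_zero {R ρ γ : n → ℕ} (hρ : ρ ≤ R) (hγ : γ ≤ R)
    (h : #(contingencyTables (R - ρ) (R - γ)) ≠ 0) : ∑ i, ρ i = ∑ i, γ i := by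
  have hsub := sum_eq_sum_of_card_contingencyTables_ne_zero h
  simp only [Pi.sub_apply] at hsub
  rw [sum_tsub_distrib _ fun i _ => hρ i, sum_tsub_distrib _ fun i _ => hγ i] at hsub
  have hρ' : ∑ i, ρ i ≤ ∑ i, R i := Fintype.sum_mono hρ
  have hγ' : ∑ i, γ i ≤ ∑ i, R i := Fintype.sum_mono hγ
  omega

lemma sum_Iic_eq_sum_subMargins_of_ne_zero {M : Type*} [AddCommMonoid M] {R : n → ℕ} {s : ℕ}
    {f : (n → ℕ) → M} (hf : ∀ ρ ≤ R, f ρ ≠ 0 → ∑ i, ρ i = s) :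
    ∑ ρ ∈ Iic R, f ρ = ∑ ρ ∈ subMargins R s, f ρ :=
  (sum_filter_of_ne fun ρ hρ => hf ρ (mem_Iic.1 hρ)).symm

lemma card_contingencyTables_eq_sum_blockCount (R : n → ℕ) :
    (#(contingencyTables (Sum.elim R R) (Sum.elim R R)) : ℚ) =
      ∑ s ∈ range (∑ i, R i + 1), blockCount R s := by
  rw [card_contingencyTables_sumElim, sum_Iic_eq_sum_subMargins]
  push_cast
  refine sum_congr rfl fun s _ => ?_
  rw [blockCount_eq_sum]
  refine sum_congr rfl fun ρ hρ => ?_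
  rw [mem_subMargins] at hρ
  -- A block with unequal margin totals has no filling, so each factor passes the total `s` on.
  rw [sum_Iic_eq_sum_subMargins_of_ne_zero (s := s)]
  · refine sum_congr rfl fun γ hγ => ?_
    rw [mem_subMargins] at hγ
    rw [sum_Iic_eq_sum_subMargins_of_ne_zero (s := s)]
    · refine sum_congr rfl fun δ hδ => ?_
      rw [sum_Iic_eq_sum_subMargins_of_ne_zero (s := s)]
      · simp only [card_contingencyTables_comm (R - δ), card_contingencyTables_comm (R - ρ)]
      · intro ε _ h
        simp only [mul_ne_zero_iff, Nat.cast_ne_zero] at h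
        rw [← sum_eq_sum_of_card_contingencyTables_ne_zero h.1.2, (mem_subMargins.1 hδ).2]
    · intro δ hδ h
      obtain ⟨ε, -, h⟩ := exists_ne_zero_of_sum_ne_zero h
      simp only [mul_ne_zero_iff, Nat.cast_ne_zero] at h
      rw [sum_eq_sum_of_card_contingencyTables_sub_ne_zero hδ hγ.1 h.1.1.2, hγ.2]
  · intro γ _ h
    obtain ⟨δ, -, h⟩ := exists_ne_zero_of_sum_ne_zero h
    obtain ⟨ε, -, h⟩ := exists_ne_zero_of_sum_ne_zero h
    simp only [mul_ne_zero_iff, Nat.cast_ne_zero] at h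
    rw [← sum_eq_sum_of_card_contingencyTables_ne_zero h.1.1.1, hρ.2]

end Square

lemma sum_range_two_mul_add_one_of_reflect {M : Type*} [AddCommMonoid M] {f : ℕ → M} {t : ℕ}
    (hf : ∀ s < t, f (2 * t - s) = f s) :
    ∑ s ∈ range (2 * t + 1), f s = 2 • ∑ s ∈ range t, f s + f t := by
  have hupper : ∑ s ∈ range t, f (t + 1 + s) = ∑ s ∈ range t, f s := by
    rw [← sum_range_reflect]
    refine sum_congr rfl fun s hs => ?_
    rw [mem_range] at hs
    rw [← hf s hs]
    congr 1
    omega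
  rw [show 2 * t + 1 = t + 1 + t by ring, sum_range_add, hupper, sum_range_succ, two_nsmul]
  abel

section SemiMagic

lemma subMargins_const {t s : ℕ} (hs : s ≤ t) :
    subMargins (fun _ : Fin 2 => t) s = pairsWithSum s := by
  ext ρ
  simp only [mem_subMargins, mem_pairsWithSum, Pi.le_def, Fin.forall_fin_two, Fin.sum_univ_two]
  omega

lemma countMatrix_pairsWithSum (s : ℕ) :
    countMatrix (pairsWithSum s) = (1 : ℚ) • vecMulVec 1 1 + minMatrix s := by
  ext ρ γ
  have hρ := mem_pairsWithSum.1 ρ.2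
  have hγ := mem_pairsWithSum.1 γ.2
  simp only [countMatrix, minMatrix, of_apply, Matrix.add_apply, Matrix.smul_apply, vecMulVec_apply,
    Pi.one_apply, card_contingencyTables_fin_two (hρ.trans hγ.symm)]
  push_cast
  ring

lemma complCountMatrix_pairsWithSum {t s : ℕ} (hs : s ≤ t) :
    complCountMatrix (fun _ => t) (pairsWithSum s) =
      (t - s + 1 : ℚ) • vecMulVec 1 1 + minMatrix s := by
  ext ρ γ
  have hρ := mem_pairsWithSum.1 ρ.2
  have hγ := mem_pairsWithSum.1 γ.2
  have hcard : #(contingencyTables ((fun _ => t) - ρ.1) ((fun _ => t) - γ.1)) =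
      t - s + 1 + (ρ.1 0 ⊓ ρ.1 1 ⊓ (γ.1 0 ⊓ γ.1 1)) := by
    rw [card_contingencyTables_fin_two] <;> simp only [Pi.sub_apply] <;> omega
  simp only [complCountMatrix, minMatrix, of_apply, Matrix.add_apply, Matrix.smul_apply,
    vecMulVec_apply, Pi.one_apply, hcard]
  push_cast [hs]
  ring

lemma blockCount_const {t s : ℕ} (hs : s ≤ t) :
    blockCount (fun _ : Fin 2 => t) s =
      (t - s + 1) ^ 2 * powMoment 1 1 (minMatrix s) 0 ^ 4
        + 2 * (t - s + 1) * (t - s + 2)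
          * powMoment 1 1 (minMatrix s) 0 ^ 2 * powMoment 1 1 (minMatrix s) 1
        + ((t - s + 1) ^ 2 + 1) * powMoment 1 1 (minMatrix s) 1 ^ 2
        + 4 * (t - s + 1) * powMoment 1 1 (minMatrix s) 0 * powMoment 1 1 (minMatrix s) 2
        + 2 * (t - s + 2) * powMoment 1 1 (minMatrix s) 3 + trace (minMatrix s ^ 4) := by
  rw [blockCount, subMargins_const hs, countMatrix_pairsWithSum, complCountMatrix_pairsWithSum hs,
    trace_sq_smul_vecMulVec_add_mul]
  ring

-- Weighting the endpoint by one half is what makes the `(-1) ^ n` from `trace_minMatrix_pow_four`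
-- cancel. The summand is quadratic in `t`, hence the shape of the right-hand side.
lemma two_mul_sum_blockCount_add {t n : ℕ} (hn : n ≤ t) :
    2 * ∑ s ∈ range n, blockCount (fun _ : Fin 2 => t) s + blockCount (fun _ : Fin 2 => t) n =
      (t + 1) ^ 2 * (1 + 773 / 210 * n + 101 / 18 * n ^ 2 + 167 / 36 * n ^ 3 + 41 / 18 * n ^ 4
          + 121 / 180 * n ^ 5 + 1 / 9 * n ^ 6 + 1 / 126 * n ^ 7)
        - (t + 1) * (236 / 105 * n + 9323 / 1260 * n ^ 2 + 152 / 15 * n ^ 3 + 5491 / 720 * n ^ 4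
          + 52 / 15 * n ^ 5 + 347 / 360 * n ^ 6 + 16 / 105 * n ^ 7 + 53 / 5040 * n ^ 8)
        + (8 / 45 * n + 2129 / 1260 * n ^ 2 + 3389 / 810 * n ^ 3 + 3523 / 720 * n ^ 4
          + 1417 / 432 * n ^ 5 + 491 / 360 * n ^ 6 + 383 / 1080 * n ^ 7 + 269 / 5040 * n ^ 8
          + 23 / 6480 * n ^ 9) := by
  induction n with
  | zero =>
    simp [blockCount_const hn, powMoment_minMatrix_zero, powMoment_minMatrix_one,
      powMoment_minMatrix_two, powMoment_minMatrix_three, trace_minMatrix_pow_four]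
  | succ n ih =>
    have hn' : n ≤ t := n.le_succ.trans hn
    specialize ih hn'
    rw [blockCount_const hn'] at ih
    rw [sum_range_succ, blockCount_const hn', blockCount_const hn]
    simp only [powMoment_minMatrix_zero, powMoment_minMatrix_one, powMoment_minMatrix_two,
      powMoment_minMatrix_three, trace_minMatrix_pow_four] at ih ⊢
    push_cast
    linear_combination ih

end SemiMagic

/-- The number of 4×4 semi-magic squares with line sum `t` equals
`(11/11340)t⁹ + (11/630)t⁸ + (19/135)t⁷ + (2/3)t⁶ + (1109/540)t⁵ + (43/10)t⁴
 + (35117/5670)t³ + (379/63)t² + (65/18)t + 1`. -/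
theorem birkhoff_H4_poly (t : ℕ) :
    (Nat.card {M : Matrix (Fin 4) (Fin 4) ℕ //
      (∀ i, ∑ j, M i j = t) ∧ (∀ j, ∑ i, M i j = t)} : ℚ) =
      (11 / 11340) * (t : ℚ) ^ 9 + (11 / 630) * (t : ℚ) ^ 8
        + (19 / 135) * (t : ℚ) ^ 7 + (2 / 3) * (t : ℚ) ^ 6
        + (1109 / 540) * (t : ℚ) ^ 5 + (43 / 10) * (t : ℚ) ^ 4
        + (35117 / 5670) * (t : ℚ) ^ 3 + (379 / 63) * (t : ℚ) ^ 2
        + (65 / 18) * (t : ℚ) + 1 := by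
  let R : Fin 2 → ℕ := fun _ => t
  let f : Fin 2 ⊕ Fin 2 ≃ Fin 4 := finSumFinEquiv
  have hR : ∑ i, R i = 2 * t := by rw [Fin.sum_univ_two, two_mul]
  have hsplit : (fun _ => t) ∘ f = Sum.elim R R := by
    ext (_ | _) <;> rfl
  have hreflect : ∀ s < t, blockCount R (2 * t - s) = blockCount R s := fun s hs =>
    hR ▸ blockCount_reflect (by omega)
  rw [Nat.subtype_card (contingencyTables _ _) fun _ => mem_contingencyTables,
    ← card_contingencyTables_comp_equiv f f, hsplit, card_contingencyTables_eq_sum_blockCount, hR,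
    sum_range_two_mul_add_one_of_reflect hreflect, nsmul_eq_mul, Nat.cast_ofNat,
    two_mul_sum_blockCount_add le_rfl]
  ring
end

section
/- Let f(z_1,...,z_n) = (∏_j z_j^{p_j}) / (∏_{1≤j<k≤n} (z_j − z_k)^{q_{jk}}), where the p_j are integers and the q_{jk} are nonnegative integers, and let 1 > ε_1 > ... > ε_n > 0. If for some r with 1 ≤ r ≤ n the total degree of f in the variables z_1,...,z_r is less than −r, then the iterated contour integral of f over the circles |z_j| = ε_j (j = 1,...,n) vanishes. -/
open scoped BigOperators

/-- The iterated contour integral of a function of `k` complex variables over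
the circles `|z_j| = ε_j`, integrating the innermost variable first. -/
noncomputable def iteratedCircleIntegral :
    (k : ℕ) → ((Fin k → ℂ) → ℂ) → (Fin k → ℝ) → ℂ
  | 0, f, _ => f Fin.elim0
  | k + 1, f, ε =>
      circleIntegral
        (fun z => iteratedCircleIntegral k (fun w => f (Fin.cons z w))
          (fun i => ε i.succ)) 0 (ε 0)

/-!
Dividing the variables `z_j` with `j ∈ s` by a unit complex number `v` only rotates the torus of
integration, so averaging the rotated integrand over `|v| = 1` does not change the integral. In a
factor `z_j / v - z_k` with `j ∈ s`, `k ∉ s` the pole can be cleared by multiplying by `v`, and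
`z_j - v z_k` has no zero with `|v| ≤ 1` because `|z_k| < |z_j|`. Hence, for fixed `z` on the torus,
the rotated integrand (with its Jacobian `v ^ (-#s)`) is `v ^ (-deg - #s)` times a function
holomorphic for `|v| ≤ 1`. As `-deg - #s > 0`, it vanishes at `v = 0`, so its average is zero by the
mean value property.
-/

open Finset MeasureTheory Metric Real

section CircleAverage

variable {E : Type*} [NormedAddCommGroup E] [NormedSpace ℂ E]

lemma circleIntegral_eq_two_pi_smul_circleAverage (f : ℂ → E) (c : ℂ) (R : ℝ) :
    (∮ z in C(c, R), f z) = (2 * π) • circleAverage (fun z => ((z - c) * Complex.I) • f z) c R := by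
  rw [circleAverage_def, smul_inv_smul₀ two_pi_pos.ne']
  simp only [circleIntegral, deriv_circleMap, circleMap_sub_center]

lemma circleAverage_comp_mul_left (f : ℂ → E) (R : ℝ) {u : ℂ} (hu : ‖u‖ = 1) :
    circleAverage (fun z => f (u * z)) 0 R = circleAverage f 0 R := by
  obtain ⟨a, rfl⟩ : ∃ a : ℝ, Complex.exp (a * Complex.I) = u := (Complex.norm_eq_one_iff u).1 hu
  have hmul (θ : ℝ) : Complex.exp (a * Complex.I) * circleMap 0 R θ = circleMap 0 R (θ + a) := by
    simpa [circleMap_zero, add_comm] using circleMap_zero_mul 1 R a θ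
  simp only [circleAverage_eq_integral_add a (f := f), circleAverage_def, hmul]

lemma smul_circleIntegral_comp_mul_left (f : ℂ → E) (R : ℝ) {u : ℂ} (hu : ‖u‖ = 1) :
    (u • ∮ z in C(0, R), f (u * z)) = ∮ z in C(0, R), f z := by
  rw [← circleIntegral.integral_smul, circleIntegral_eq_two_pi_smul_circleAverage,
    circleIntegral_eq_two_pi_smul_circleAverage f,
    ← circleAverage_comp_mul_left (fun z => ((z - 0) * Complex.I) • f z) R hu]
  congr! 3 with z
  rw [smul_smul]
  ring_nf

lemma circleAverage_pow_smul_eq_zero [CompleteSpace E] {g : ℂ → E} {R : ℝ}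
    (hg : DiffContOnCl ℂ g (ball 0 |R|)) {d : ℕ} (hd : d ≠ 0) :
    circleAverage (fun v => v ^ d • g v) 0 R = 0 := by
  have hdiff : DiffContOnCl ℂ (fun v => v ^ d • g v) (ball 0 |R|) :=
    (differentiable_pow d).diffContOnCl.smul hg
  rw [hdiff.circleAverage, zero_pow hd, zero_smul]

lemma circleAverage_torusIntegral {k : ℕ} {a : Fin k → ℂ} {ε : Fin k → ℝ} {c : ℂ} {R : ℝ}
    {F : ℂ → (Fin k → ℂ) → E}
    (hF : Continuous fun x : ℝ × (Fin k → ℝ) => F (circleMap c R x.1) (torusMap a ε x.2)) :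
    circleAverage (fun v => ∯ z in T(a, ε), F v z) c R =
      ∯ z in T(a, ε), circleAverage (fun v => F v z) c R := by
  simp only [circleAverage_def, torusIntegral, ← integral_smul, smul_comm _ (2 * π)⁻¹,
    ← intervalIntegral.integral_smul]
  refine intervalIntegral_integral_swap ?_
  rw [Measure.prod_restrict]
  refine IntegrableOn.mono_set (ContinuousOn.integrableOn_compact
    (isCompact_uIcc.prod isCompact_Icc) (Continuous.continuousOn ?_))
    (Set.prod_mono_left Set.uIoc_subset_uIcc)
  have hjac : Continuous fun x : ℝ × (Fin k → ℝ) =>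
      ∏ i, (ε i : ℂ) * Complex.exp (x.2 i * Complex.I) * Complex.I := by fun_prop
  exact (hjac.smul hF).const_smul _

end CircleAverage

lemma mul_finCons {α : Type*} [Mul α] {k : ℕ} (u : Fin (k + 1) → α) (x : α) (w : Fin k → α) :
    u * Fin.cons x w = (Fin.cons (u 0 * x) (Fin.tail u * w) : Fin (k + 1) → α) := by
  ext i
  refine Fin.cases ?_ (fun i => ?_) i <;> simp [Fin.tail]

section IteratedCircleIntegral

variable {k : ℕ} {ε : Fin k → ℝ}

lemma torusIntegrable_of_continuous {E : Type*} [NormedAddCommGroup E] {f : (Fin k → ℂ) → E}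
    {c : Fin k → ℂ} (hf : Continuous fun θ => f (torusMap c ε θ)) : TorusIntegrable f c ε :=
  hf.continuousOn.integrableOn_compact isCompact_Icc

lemma norm_torusMap_zero (ε : Fin k → ℝ) (θ : Fin k → ℝ) (i : Fin k) :
    ‖torusMap 0 ε θ i‖ = |ε i| := by
  simp [torusMap]

lemma torusMap_cons (c : Fin (k + 1) → ℂ) (ε : Fin (k + 1) → ℝ) (t : ℝ) (θ : Fin k → ℝ) :
    torusMap c ε (Fin.cons t θ) =
      Fin.cons (circleMap (c 0) (ε 0) t) (torusMap (Fin.tail c) (Fin.tail ε) θ) := by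
  ext i
  refine Fin.cases ?_ (fun i => ?_) i <;> simp [torusMap, circleMap, Fin.tail]

lemma iteratedCircleIntegral_eq_torusIntegral {f : (Fin k → ℂ) → ℂ}
    (hf : Continuous fun θ => f (torusMap 0 ε θ)) :
    iteratedCircleIntegral k f ε = ∯ z in T(0, ε), f z := by
  induction k with
  | zero => simp [iteratedCircleIntegral, torusIntegral_dim0, Subsingleton.elim Fin.elim0 0]
  | succ k ih =>
    rw [torusIntegral_succ (torusIntegrable_of_continuous hf)]
    simp only [iteratedCircleIntegral, circleIntegral]
    refine intervalIntegral.integral_congr fun t _ => ?_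
    have hslice : Continuous fun θ : Fin k → ℝ =>
        f (Fin.cons (circleMap 0 (ε 0) t) (torusMap 0 (fun i => ε i.succ) θ)) :=
      (hf.comp (continuous_const.finCons continuous_id)).congr fun θ =>
        congrArg f (torusMap_cons 0 ε t θ)
    exact congrArg _ (ih hslice)

lemma iteratedCircleIntegral_const_mul (c : ℂ) (f : (Fin k → ℂ) → ℂ) :
    iteratedCircleIntegral k (fun z => c * f z) ε = c * iteratedCircleIntegral k f ε := by
  induction k with
  | zero => rfl
  | succ k ih => simp only [iteratedCircleIntegral, ih, circleIntegral.integral_const_mul]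

lemma prod_mul_iteratedCircleIntegral_comp_mul_left (f : (Fin k → ℂ) → ℂ) {u : Fin k → ℂ}
    (hu : ∀ i, ‖u i‖ = 1) :
    (∏ i, u i) * iteratedCircleIntegral k (fun z => f (u * z)) ε =
      iteratedCircleIntegral k f ε := by
  induction k with
  | zero =>
    simp [iteratedCircleIntegral, Subsingleton.elim (u * _) Fin.elim0]
  | succ k ih =>
    have htail (y : ℂ) : (∏ i, Fin.tail u i) * iteratedCircleIntegral k
        (fun w => f (Fin.cons y (Fin.tail u * w))) (fun i => ε i.succ) =
        iteratedCircleIntegral k (fun w => f (Fin.cons y w)) (fun i => ε i.succ) :=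
      ih (fun w => f (Fin.cons y w)) fun i => hu i.succ
    calc
      _ = u 0 * ∮ x in C(0, ε 0), (∏ i, Fin.tail u i) * iteratedCircleIntegral k
          (fun w => f (Fin.cons (u 0 * x) (Fin.tail u * w))) (fun i => ε i.succ) := by
        simp only [iteratedCircleIntegral, mul_finCons, Fin.prod_univ_succ, mul_assoc,
          circleIntegral.integral_const_mul, Fin.tail]
      _ = u 0 * ∮ x in C(0, ε 0), iteratedCircleIntegral k
          (fun w => f (Fin.cons (u 0 * x) w)) (fun i => ε i.succ) := by
        simp only [htail]
      _ = _ := smul_circleIntegral_comp_mul_left (fun x => iteratedCircleIntegral k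
          (fun w => f (Fin.cons x w)) fun i => ε i.succ) (ε 0) (hu 0)

end IteratedCircleIntegral

lemma prod_zpow_eq_zpow_sum₀ {ι G : Type*} [CommGroupWithZero G] {a : G} (ha : a ≠ 0)
    (s : Finset ι) (e : ι → ℤ) : ∏ i ∈ s, a ^ e i = a ^ ∑ i ∈ s, e i := by
  induction s using Finset.cons_induction with
  | empty => simp
  | cons i s hi ih => rw [prod_cons, sum_cons, zpow_add₀ ha, ih]

section Dilation

variable {ι K : Type*} [DecidableEq ι] [Field K]

/-- The coordinatewise factor `v⁻¹` on `s` and `1` off `s`; multiplying by it and letting `v → 0`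
sends the variables indexed by `s` to infinity. -/
def dilationFactor (s : Finset ι) (v : K) : ι → K := s.piecewise (fun _ => v⁻¹) 1

lemma prod_dilationFactor [Fintype ι] (s : Finset ι) (v : K) :
    ∏ i, dilationFactor s v i = v⁻¹ ^ #s := by
  simp [dilationFactor, prod_piecewise]

lemma prod_dilationFactor_zpow [Fintype ι] (s : Finset ι) {v : K} (hv : v ≠ 0) (e : ι → ℤ) :
    ∏ i, dilationFactor s v i ^ e i = v⁻¹ ^ ∑ i ∈ s, e i := by
  rw [← prod_zpow_eq_zpow_sum₀ (inv_ne_zero hv), ← Fintype.prod_ite_mem s]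
  refine Fintype.prod_congr _ _ fun i => ?_
  by_cases hi : i ∈ s <;> simp [dilationFactor, hi]

lemma norm_dilationFactor {𝕜 : Type*} [NormedField 𝕜] (s : Finset ι) {v : 𝕜} (hv : ‖v‖ = 1)
    (i : ι) : ‖dilationFactor s v i‖ = 1 := by
  by_cases hi : i ∈ s <;> simp [dilationFactor, hi, hv]

lemma dilationFactor_mul_torusMap {n : ℕ} (s : Finset (Fin n)) (ε : Fin n → ℝ) (φ : ℝ)
    (θ : Fin n → ℝ) :
    dilationFactor s (circleMap 0 1 φ) * torusMap 0 ε θ =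
      torusMap 0 ε (θ - s.piecewise (fun _ => φ) 0) := by
  ext i
  by_cases hi : i ∈ s
  · simp [dilationFactor, torusMap, circleMap, hi, sub_mul, Complex.exp_sub, div_eq_inv_mul,
      mul_left_comm]
  · simp [dilationFactor, torusMap, hi]

lemma continuous_comp_dilationFactor_mul_torusMap {n : ℕ} {X : Type*} [TopologicalSpace X]
    {ε : Fin n → ℝ} {f : (Fin n → ℂ) → X} (hf : Continuous fun θ => f (torusMap 0 ε θ))
    (s : Finset (Fin n)) :
    Continuous fun x : ℝ × (Fin n → ℝ) =>
      f (dilationFactor s (circleMap 0 1 x.1) * torusMap 0 ε x.2) := by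
  simp only [dilationFactor_mul_torusMap]
  refine hf.comp (continuous_snd.sub (continuous_pi fun i => ?_))
  by_cases hi : i ∈ s <;> simp only [hi, piecewise_eq_of_mem, piecewise_eq_of_notMem,
    not_false_eq_true] <;> fun_prop

theorem iteratedCircleIntegral_eq_zero_of_dilationFactor_mul {n : ℕ} {ε : Fin n → ℝ}
    {f : (Fin n → ℂ) → ℂ} (hf : Continuous fun θ => f (torusMap 0 ε θ)) (s : Finset (Fin n))
    {m : ℕ} (hm : #s < m)
    (h : ∀ θ, ∃ g : ℂ → ℂ, DiffContOnCl ℂ g (ball 0 1) ∧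
      ∀ v ∈ sphere 0 1, f (dilationFactor s v * torusMap 0 ε θ) = v ^ m * g v) :
    iteratedCircleIntegral n f ε = 0 := by
  let F (v : ℂ) (z : Fin n → ℂ) : ℂ := (∏ i, dilationFactor s v i) * f (dilationFactor s v * z)
  have hF : Continuous fun x : ℝ × (Fin n → ℝ) => F (circleMap 0 1 x.1) (torusMap 0 ε x.2) := by
    simp only [F, prod_dilationFactor, circleMap_zero_inv]
    exact (by fun_prop : Continuous fun x : ℝ × (Fin n → ℝ) => circleMap 0 1⁻¹ (-x.1) ^ #s).mul
      (continuous_comp_dilationFactor_mul_torusMap hf s)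
  have hrot : ∀ v ∈ sphere (0 : ℂ) |1|,
      (∯ z in T(0, ε), F v z) = iteratedCircleIntegral n f ε := by
    intro v hv
    obtain ⟨φ, rfl⟩ := (range_circleMap 0 1).ge hv
    rw [← iteratedCircleIntegral_eq_torusIntegral (hF.comp (Continuous.prodMk_right φ)),
      iteratedCircleIntegral_const_mul, prod_mul_iteratedCircleIntegral_comp_mul_left]
    exact norm_dilationFactor s (by simp)
  have havg (θ : Fin n → ℝ) : circleAverage (fun v => F v (torusMap 0 ε θ)) 0 1 = 0 := by
    obtain ⟨g, hg, hfg⟩ := h θ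
    obtain ⟨d, rfl⟩ := Nat.exists_eq_add_of_lt hm
    have hFg : Set.EqOn (fun v => F v (torusMap 0 ε θ)) (fun v => v ^ (d + 1) • g v)
        (sphere 0 |1|) := fun v hv => by
      rw [abs_one] at hv
      have hv0 : v ≠ 0 := ne_of_mem_sphere hv one_ne_zero
      simp only [F, prod_dilationFactor, hfg v hv, smul_eq_mul, ← mul_assoc]
      rw [add_assoc, pow_add, ← mul_assoc, ← mul_pow, inv_mul_cancel₀ hv0, one_pow, one_mul]
    rw [circleAverage_congr_sphere hFg,
      circleAverage_pow_smul_eq_zero (by rwa [abs_one]) d.succ_ne_zero]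
  rw [← circleAverage_const_on_circle hrot, circleAverage_torusIntegral hF]
  simp [torusIntegral, havg]

/-- The factor `z_j - z_k` after the variables indexed by `s` have been divided by `v` and, if one
of the two variables is among them, the pole at `v = 0` has been cleared by multiplying by `v`. -/
def clearedDifference (s : Finset ι) (z : ι → K) (j k : ι) (v : K) : K :=
  if j ∈ s ∨ k ∈ s then s.piecewise z (v • z) j - s.piecewise z (v • z) k else z j - z k

lemma dilationFactor_mul_sub (s : Finset ι) (z : ι → K) (j k : ι) {v : K} (hv : v ≠ 0) :
    (dilationFactor s v * z) j - (dilationFactor s v * z) k =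
      (if j ∈ s ∨ k ∈ s then v⁻¹ else 1) * clearedDifference s z j k v := by
  by_cases hj : j ∈ s <;> by_cases hk : k ∈ s <;>
    simp [dilationFactor, clearedDifference, hj, hk, mul_sub, hv]

lemma clearedDifference_ne_zero {𝕜 : Type*} [NormedField 𝕜] {s : Finset ι} {z : ι → 𝕜}
    (hz : Function.Injective fun j => ‖z j‖) (hs : ∀ j ∈ s, ∀ k ∉ s, ‖z k‖ < ‖z j‖)
    {j k : ι} (hjk : j ≠ k) {v : 𝕜} (hv : ‖v‖ ≤ 1) :
    clearedDifference s z j k v ≠ 0 := by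
  have hne : z j ≠ z k := fun h => hjk (hz (congrArg norm h))
  have hlt {a b : ι} (ha : a ∈ s) (hb : b ∉ s) : ‖v * z b‖ < ‖z a‖ :=
    (norm_mul_le_of_le hv le_rfl).trans_lt (by simpa using hs a ha b hb)
  by_cases hj : j ∈ s <;> by_cases hk : k ∈ s
  · simpa [clearedDifference, hj, hk, sub_eq_zero] using hne
  · have : z j ≠ v * z k := fun h => (hlt hj hk).ne (congrArg norm h.symm)
    simpa [clearedDifference, hj, hk, sub_eq_zero] using this
  · have : v * z j ≠ z k := fun h => (hlt hk hj).ne (congrArg norm h)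
    simpa [clearedDifference, hj, hk, sub_eq_zero] using this
  · simpa [clearedDifference, hj, hk, sub_eq_zero] using hne

lemma differentiable_clearedDifference {𝕜 : Type*} [NontriviallyNormedField 𝕜] (s : Finset ι)
    (z : ι → 𝕜) (j k : ι) : Differentiable 𝕜 (clearedDifference s z j k) := by
  unfold clearedDifference Finset.piecewise
  simp only [Pi.smul_apply, smul_eq_mul]
  split_ifs <;> fun_prop

end Dilation

section DifferenceQuotient

variable {ι K : Type*} [Fintype ι] [LinearOrder ι] [Field K]

/-- The rational function `(∏_j z_j^{p_j}) / ∏_{j<k} (z_j - z_k)^{q_{jk}}`. -/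
def differenceQuotient (p : ι → ℤ) (q : ι → ι → ℕ) (z : ι → K) : K :=
  (∏ j, z j ^ p j) / ∏ j, ∏ k with j < k, (z j - z k) ^ q j k

/-- The degree of `differenceQuotient p q` in the variables indexed by `s`: a factor `z_j - z_k`
contributes as soon as one of `z_j`, `z_k` is among these variables. -/
def degreeIn (s : Finset ι) (p : ι → ℤ) (q : ι → ι → ℕ) : ℤ :=
  ∑ j ∈ s, p j - ∑ j, ∑ k with j < k, if j ∈ s ∨ k ∈ s then (q j k : ℤ) else 0

/-- `differenceQuotient p q` with every `z_j - z_k` replaced by its `clearedDifference`. -/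
def clearedQuotient (s : Finset ι) (p : ι → ℤ) (q : ι → ι → ℕ) (z : ι → K) (v : K) : K :=
  (∏ j, z j ^ p j) / ∏ j, ∏ k with j < k, clearedDifference s z j k v ^ q j k

lemma differenceQuotient_dilationFactor_mul (s : Finset ι) (p : ι → ℤ) (q : ι → ι → ℕ)
    (z : ι → K) {v : K} (hv : v ≠ 0) :
    differenceQuotient p q (dilationFactor s v * z) =
      v ^ (-degreeIn s p q) * clearedQuotient s p q z v := by
  have hnum : ∏ j, (dilationFactor s v * z) j ^ p j = v⁻¹ ^ (∑ j ∈ s, p j) * ∏ j, z j ^ p j := by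
    simp only [Pi.mul_apply, mul_zpow, prod_mul_distrib, prod_dilationFactor_zpow s hv]
  have hden : ∏ j, ∏ k with j < k,
        ((dilationFactor s v * z) j - (dilationFactor s v * z) k) ^ q j k =
      v⁻¹ ^ (∑ j, ∑ k with j < k, if j ∈ s ∨ k ∈ s then (q j k : ℤ) else 0) *
        ∏ j, ∏ k with j < k, clearedDifference s z j k v ^ q j k := by
    simp only [dilationFactor_mul_sub s z _ _ hv, mul_pow, prod_mul_distrib,
      ← prod_zpow_eq_zpow_sum₀ (inv_ne_zero hv)]
    congr! 5 with j _ k _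
    split_ifs <;> simp
  rw [differenceQuotient, hnum, hden, mul_div_mul_comm, ← zpow_sub₀ (inv_ne_zero hv),
    inv_zpow', clearedQuotient, degreeIn]

lemma differentiableOn_clearedQuotient {𝕜 : Type*} [NontriviallyNormedField 𝕜] {s : Finset ι}
    {z : ι → 𝕜} (p : ι → ℤ) (q : ι → ι → ℕ)
    (hz : Function.Injective fun j => ‖z j‖) (hs : ∀ j ∈ s, ∀ k ∉ s, ‖z k‖ < ‖z j‖) :
    DifferentiableOn 𝕜 (clearedQuotient s p q z) (closedBall 0 1) := by
  have hden : Differentiable 𝕜 fun v =>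
      ∏ j, ∏ k with j < k, clearedDifference s z j k v ^ q j k := by
    have hdiff := differentiable_clearedDifference s z
    fun_prop
  refine (differentiableOn_const _).div hden.differentiableOn fun v hv => ?_
  refine prod_ne_zero_iff.2 fun j _ => prod_ne_zero_iff.2 fun k hk => pow_ne_zero _ ?_
  exact clearedDifference_ne_zero hz hs (mem_filter.1 hk).2.ne (mem_closedBall_zero_iff.1 hv)

end DifferenceQuotient

lemma continuous_differenceQuotient_torusMap {n : ℕ} (p : Fin n → ℤ) (q : Fin n → Fin n → ℕ)
    {ε : Fin n → ℝ} (hε0 : ∀ j, ε j ≠ 0) (hε : Function.Injective fun j => |ε j|) :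
    Continuous fun θ => differenceQuotient p q (torusMap 0 ε θ) := by
  have htorus : Continuous (torusMap 0 ε) := by unfold torusMap; fun_prop
  have hsub (θ : Fin n → ℝ) {j k : Fin n} (hjk : j ≠ k) :
      torusMap 0 ε θ j - torusMap 0 ε θ k ≠ 0 := fun h =>
    hjk (hε (by simpa only [norm_torusMap_zero] using congrArg norm (sub_eq_zero.1 h)))
  refine Continuous.div ?_ (by fun_prop) fun θ => ?_
  · refine continuous_finsetProd _ fun j _ => Continuous.zpow₀ (by fun_prop) _ fun θ => Or.inl ?_
    rw [← norm_ne_zero_iff, norm_torusMap_zero]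
    exact abs_ne_zero.2 (hε0 j)
  · exact prod_ne_zero_iff.2 fun j _ => prod_ne_zero_iff.2 fun k hk =>
      pow_ne_zero _ (hsub θ (mem_filter.1 hk).2.ne)

theorem iterated_integral_vanishes_general {n : ℕ} (p : Fin n → ℤ) (q : Fin n → Fin n → ℕ)
    {ε : Fin n → ℝ} (hε0 : ∀ j, 0 < ε j) (hε : Function.Injective ε) (s : Finset (Fin n))
    (hs : ∀ j ∈ s, ∀ k ∉ s, ε k < ε j) (hdeg : degreeIn s p q < -#s) :
    iteratedCircleIntegral n (differenceQuotient p q) ε = 0 := by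
  have hnorm (θ : Fin n → ℝ) (j : Fin n) : ‖torusMap 0 ε θ j‖ = ε j := by
    rw [norm_torusMap_zero, abs_of_pos (hε0 j)]
  obtain ⟨m, hm⟩ : ∃ m : ℕ, (m : ℤ) = -degreeIn s p q := ⟨(-degreeIn s p q).toNat, by lia⟩
  refine iteratedCircleIntegral_eq_zero_of_dilationFactor_mul
    (continuous_differenceQuotient_torusMap p q (fun j => (hε0 j).ne')
      (by simpa only [abs_of_pos (hε0 _)] using hε)) s (m := m) (by lia) fun θ =>
    ⟨clearedQuotient s p q (torusMap 0 ε θ), ?_, fun v hv => ?_⟩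
  · exact (differentiableOn_clearedQuotient p q (by simpa only [hnorm] using hε)
      (by simpa only [hnorm] using hs)).diffContOnCl_ball subset_rfl
  · rw [differenceQuotient_dilationFactor_mul s p q _ (ne_of_mem_sphere hv one_ne_zero), ← hm,
      zpow_natCast]

lemma degreeIn_of_isLowerSet {ι : Type*} [Fintype ι] [LinearOrder ι] {s : Finset ι}
    (hs : IsLowerSet (s : Set ι)) (p : ι → ℤ) (q : ι → ι → ℕ) :
    degreeIn s p q = ∑ j ∈ s, p j - ∑ j ∈ s, ∑ k with j < k, (q j k : ℤ) := by
  rw [degreeIn, ← Fintype.sum_ite_mem s fun j => ∑ k with j < k, (q j k : ℤ)]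
  congr! 2 with j
  by_cases hj : j ∈ s
  · simp [hj]
  · simp only [hj, false_or, if_false]
    exact sum_eq_zero fun k hk => if_neg fun hks => hj (hs (mem_filter.1 hk).2.le hks)

lemma isLowerSet_filter_val_lt (n r : ℕ) :
    IsLowerSet ((univ.filter fun j : Fin n => (j : ℕ) < r : Finset (Fin n)) : Set (Fin n)) :=
  fun _ _ hkj hj => by simpa using (Fin.le_def.1 hkj).trans_lt (by simpa using hj)

/-- Let `f(z) = (∏_j z_j^{p_j}) / (∏_{j<k} (z_j - z_k)^{q_{jk}})` and let
`1 > ε_1 > ⋯ > ε_n > 0`.  If for some `1 ≤ r ≤ n` the degree of `f` in the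
variables `z_1, …, z_r` (numerator degree minus denominator degree in those
variables) is less than `-r`, then the iterated contour integral of `f` over
the circles `|z_j| = ε_j` vanishes. -/
theorem iterated_integral_vanishes (n : ℕ) (p : Fin n → ℤ) (q : Fin n → Fin n → ℕ)
    (ε : Fin n → ℝ) (hε0 : ∀ j, 0 < ε j) (hε1 : ∀ j, ε j < 1)
    (hεmono : ∀ j k : Fin n, j < k → ε k < ε j)
    (r : ℕ) (hr1 : 1 ≤ r) (hrn : r ≤ n)
    (hdeg : (∑ j ∈ Finset.univ.filter (fun j : Fin n => (j : ℕ) < r), p j) -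
        (∑ j ∈ Finset.univ.filter (fun j : Fin n => (j : ℕ) < r), ∑ k ∈
          Finset.univ.filter (fun k : Fin n => j < k), (q j k : ℤ)) < -(r : ℤ)) :
    iteratedCircleIntegral n
      (fun z => (∏ j, z j ^ (p j)) /
        ∏ j, ∏ k ∈ Finset.univ.filter (fun k : Fin n => j < k),
          (z j - z k) ^ (q j k)) ε = 0 := by
  have hlow := isLowerSet_filter_val_lt n r
  refine iterated_integral_vanishes_general p q hε0 (StrictAnti.injective hεmono)
    (univ.filter fun j : Fin n => (j : ℕ) < r)
    (fun j hj k hk => hεmono j k (not_le.1 fun hkj => hk (hlow hkj hj))) ?_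
  rwa [degreeIn_of_isLowerSet hlow, Fin.card_filter_val_lt, min_eq_right hrn]
end
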